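/- arXiv:2509.14359 — 5 statements merged into one kernel-verified Lean document; each statement's English description precedes it below -/
import Mathlib

section
/- Let n ≥ 1 and let N = {n_1,…,n_s; n} be a scheme for distinct nodes X = {A_1,…,A_s} ⊂ ℝ² such that Σ_{k=1}^s C(n_k+1,2) ≤ C(n+2,2) and Σ_{k=1}^s n_k ≤ 2n+2. Then the Hermite interpolation problem (N,X) is n-solvable if and only if (i) for every line ℓ, the sum of the multiplicities n_k over the nodes A_k lying on ℓ is at most n+1, and (ii) for every conic β, the sum of the multiplicities n_k over the nodes A_k lying on β is at most 2n+1. -/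
open MvPolynomial

/-- `Dij i j p` is the partial derivative `D^{ij} p = ∂^{i+j} p / ∂x^i ∂y^j`. -/
noncomputable def Dij (i j : ℕ) (p : MvPolynomial (Fin 2) ℝ) : MvPolynomial (Fin 2) ℝ :=
  (fun q => pderiv (0 : Fin 2) q)^[i] ((fun q => pderiv (1 : Fin 2) q)^[j] p)

/-- The Hermite interpolation problem with multiplicities `nk` on the nodes `A` is
`n`-solvable: every data admits an interpolant in `Π_n`. -/
def HermiteSolvable (n s : ℕ) (nk : Fin s → ℕ) (A : Fin s → Fin 2 → ℝ) : Prop :=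
  ∀ c : Fin s → ℕ → ℕ → ℝ,
    ∃ p : MvPolynomial (Fin 2) ℝ, p.totalDegree ≤ n ∧
      ∀ (k : Fin s) (i j : ℕ), i + j + 1 ≤ nk k → eval (A k) (Dij i j p) = c k i j

/-!
Conditions (i) and (ii) are necessary because the polynomials of degree `n` divisible by the
equation `q` of a curve are the multiples of `q` by polynomials of degree `n - deg q`: comparing
dimensions bounds the number of conditions that the nodes on the curve may impose.

Conversely, a curve `q = 0` of degree `d` reduces the problem in degree `n` to two others: a
problem along the curve, and a problem in degree `n - d` where the multiplicities of the nodes on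
the curve have dropped by one. On a line the first one is univariate and solvable as long as the
multiplicities sum to at most `n + 1`. Removing a line of maximal multiplicity preserves
condition (i), which settles `∑ m ≤ 2 n + 1` by induction. If `∑ m = 2 n + 2`, one removes a line
with three nodes, or a line of multiplicity `n + 1`, and lands in the previous case or the inductive
hypothesis; if neither exists, one removes a conic through the five heaviest nodes.
-/

namespace HermiteInterpolation

section Translation

variable {σ R : Type*} [CommRing R]

/-- The substitution `p(x) ↦ p(x + a)`, which turns Taylor coefficients of `p` at `a` into
coefficients. -/
noncomputable def translate (a : σ → R) : MvPolynomial σ R ≃ₐ[R] MvPolynomial σ R :=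
  AlgEquiv.ofAlgHom (aeval fun i => X i + C (a i)) (aeval fun i => X i - C (a i))
    (by ext i; simp) (by ext i; simp)

lemma translate_X (a : σ → R) (i : σ) : translate a (X i) = X i + C (a i) := by
  simp [translate]

lemma coeff_zero_translate (a : σ → R) (p : MvPolynomial σ R) :
    coeff 0 (translate a p) = eval a p := by
  suffices constantCoeff.comp (translate a : MvPolynomial σ R →+* MvPolynomial σ R) = eval a from
    congr($this p)
  ext i <;> simp [translate]

lemma pderiv_translate (a : σ → R) (i : σ) (p : MvPolynomial σ R) :
    pderiv i (translate a p) = translate a (pderiv i p) := by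
  induction p using MvPolynomial.induction_on with
  | C r => simp [translate]
  | add p q hp hq => simp only [map_add, hp, hq]
  | mul_X p j hp =>
    have hX : pderiv i (translate a (X j)) = translate a (pderiv i (X j)) := by
      classical
      rw [translate_X, map_add, pderiv_C, add_zero, pderiv_X, Pi.single_apply]
      split_ifs <;> simp
    simp only [map_mul, pderiv_mul, map_add, hp, hX]

lemma iterate_pderiv_translate (a : σ → R) (i : σ) (k : ℕ) (p : MvPolynomial σ R) :
    (pderiv i)^[k] (translate a p) = translate a ((pderiv i)^[k] p) :=
  ((show Function.Semiconj (translate a) (pderiv i) (pderiv i) from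
    fun q => (pderiv_translate a i q).symm).iterate_right k p).symm

lemma ker_eval_pow (a : σ → R) (m : ℕ) :
    RingHom.ker (eval a) ^ m = (idealOfVars σ R ^ m).comap (translate a) := by
  have ker_eval : RingHom.ker (eval a) = (idealOfVars σ R).comap (translate a) := by
    ext p
    rw [Ideal.mem_comap, ← pow_one (idealOfVars σ R), mem_pow_idealOfVars_iff', RingHom.mem_ker,
      ← coeff_zero_translate]
    simp [Finsupp.degree_eq_zero_iff]
  rw [ker_eval, ← Ideal.map_comap_eq_self_of_equiv (translate a) (idealOfVars σ R), ← Ideal.map_pow,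
    Ideal.comap_map_of_bijective _ (translate a).bijective,
    Ideal.comap_map_of_bijective _ (translate a).bijective]

lemma mem_ker_eval_pow_iff {a : σ → R} {m : ℕ} {p : MvPolynomial σ R} :
    p ∈ RingHom.ker (eval a) ^ m ↔ ∀ d, d.degree < m → coeff d (translate a p) = 0 := by
  rw [ker_eval_pow, Ideal.mem_comap, mem_pow_idealOfVars_iff']

end Translation

lemma coeff_iterate_pderiv {σ R : Type*} [CommSemiring R] (i : σ) (k : ℕ) (d : σ →₀ ℕ)
    (p : MvPolynomial σ R) :
    coeff d ((pderiv i)^[k] p) =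
      coeff (d + Finsupp.single i k) p * (d i + 1).ascFactorial k := by
  induction k generalizing d with
  | zero => simp
  | succ k ih =>
    rw [Function.iterate_succ_apply', coeff_pderiv, ih, add_assoc, ← Finsupp.single_add,
      add_comm 1 k]
    have : (d i + 1).ascFactorial (k + 1) = (d i + 1 + 1).ascFactorial k * (d i + 1) := by
      rw [Nat.ascFactorial_succ, ← Nat.succ_ascFactorial, mul_comm]
    rw [this]
    simp [mul_assoc]

instance finite_degree_lt {σ : Type*} [Finite σ] (m : ℕ) : Finite {d : σ →₀ ℕ // d.degree < m} :=
  Finsupp.finite_of_degree_lt m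

lemma card_degree_lt (m : ℕ) :
    Nat.card {d : Fin 2 →₀ ℕ // d.degree < m} = (m + 1).choose 2 := by
  induction m with
  | zero => simp
  | succ m ih =>
    have disjoint : Disjoint {d : Fin 2 →₀ ℕ | d.degree < m} {d | d.degree = m} :=
      Set.disjoint_left.2 fun d hd hd' => hd.ne hd'
    have union : {d : Fin 2 →₀ ℕ | d.degree < m + 1} = {d | d.degree < m} ∪ {d | d.degree = m} := by
      ext d
      exact Nat.lt_succ_iff_lt_or_eq
    have antidiagonal : {d : Fin 2 →₀ ℕ | d.degree = m} =
        Finset.finsuppAntidiag (Finset.univ : Finset (Fin 2)) m := by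
      ext d
      simp [Finsupp.degree_eq_sum]
    change Set.ncard {d : Fin 2 →₀ ℕ | d.degree < m + 1} = _
    change Set.ncard {d : Fin 2 →₀ ℕ | d.degree < m} = _ at ih
    rw [union, Set.ncard_union_eq disjoint (Finsupp.finite_of_degree_lt m)
      (Finsupp.finite_of_degree_eq m), ih, antidiagonal, Set.ncard_coe_finset,
      Finset.card_finsuppAntidiag_nat_eq_choose, Nat.choose_succ_succ' (m + 1) 1,
      Finset.card_univ, Fintype.card_fin, Nat.choose_one_right,
      show 2 + m - 1 = m + 1 by lia, Nat.choose_succ_self_right, add_comm]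

lemma finrank_restrictTotalDegree (K : Type*) [Field K] (n : ℕ) :
    Module.finrank K (restrictTotalDegree (Fin 2) K n) = (n + 2).choose 2 := by
  rw [← card_degree_lt (n + 1), restrictTotalDegree,
    Module.finrank_eq_nat_card_basis (basisRestrictSupport K _)]
  congr! 3 with d
  exact Nat.lt_succ_iff.symm

section FatPoints

variable {σ ι K : Type*} [Field K]

/-- Polynomials of degree at most `n` represent every residue class modulo `I`: the zero-dimensional
scheme defined by `I` imposes independent conditions on them. -/
def ImposesIndependentConditions (I : Ideal (MvPolynomial σ K)) (n : ℕ) : Prop :=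
  ∀ f, ∃ p, p.totalDegree ≤ n ∧ f - p ∈ I

/-- The ideal of the polynomials vanishing to order `m k` at each node `A k`. -/
noncomputable def fatPointIdeal (A : ι → σ → K) (m : ι → ℕ) : Ideal (MvPolynomial σ K) :=
  ⨅ k, RingHom.ker (eval (A k)) ^ m k

/-- The family of the Taylor coefficients of order less than `m k` at the nodes `A k`. -/
noncomputable def jet (A : ι → σ → K) (m : ι → ℕ) :
    MvPolynomial σ K →ₗ[K] ∀ k, {d : σ →₀ ℕ // d.degree < m k} → K :=
  LinearMap.pi fun k => LinearMap.pi fun d => lcoeff K d.1 ∘ₗ (translate (A k)).toLinearMap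

lemma jet_apply (A : ι → σ → K) (m : ι → ℕ) (p : MvPolynomial σ K) (k : ι)
    (d : {d : σ →₀ ℕ // d.degree < m k}) : jet A m p k d = coeff d.1 (translate (A k) p) :=
  rfl

lemma mem_fatPointIdeal {A : ι → σ → K} {m : ι → ℕ} {p : MvPolynomial σ K} :
    p ∈ fatPointIdeal A m ↔ ∀ k, p ∈ RingHom.ker (eval (A k)) ^ m k :=
  Submodule.mem_iInf _

lemma ker_jet (A : ι → σ → K) (m : ι → ℕ) :
    LinearMap.ker (jet A m) = (fatPointIdeal A m).restrictScalars K := by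
  ext p
  simp only [LinearMap.mem_ker, Submodule.restrictScalars_mem, mem_fatPointIdeal,
    mem_ker_eval_pow_iff, funext_iff, Subtype.forall]
  rfl

lemma jet_eq_iff {A : ι → σ → K} {m : ι → ℕ} {p q : MvPolynomial σ K} :
    jet A m p = jet A m q ↔ p - q ∈ fatPointIdeal A m := by
  rw [← sub_eq_zero, ← map_sub, ← LinearMap.mem_ker, ker_jet, Submodule.restrictScalars_mem]

lemma imposesIndependentConditions_of_forall_eq_zero {A : ι → σ → K} {m : ι → ℕ} {n : ℕ}
    (h : ∀ k, m k = 0) : ImposesIndependentConditions (fatPointIdeal A m) n :=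
  fun f => ⟨0, by simp, mem_fatPointIdeal.2 fun k => by simp [h k]⟩

lemma isCoprime_span_singleton_ker_eval {a : σ → K} {q : MvPolynomial σ K} (h : eval a q ≠ 0) :
    IsCoprime (Ideal.span {q}) (RingHom.ker (eval a)) := by
  refine Ideal.isCoprime_iff_exists.2 ⟨C (eval a q)⁻¹ * q, ?_, 1 - C (eval a q)⁻¹ * q, ?_, ?_⟩
  · exact Ideal.mul_mem_left _ _ (Ideal.mem_span_singleton_self q)
  · simp [RingHom.mem_ker, inv_mul_cancel₀ h]
  · exact add_sub_cancel _ _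

lemma isCoprime_ker_eval {a b : σ → K} (h : a ≠ b) :
    IsCoprime (RingHom.ker (eval a)) (RingHom.ker (eval b)) := by
  obtain ⟨i, hi⟩ := Function.ne_iff.1 h
  have span_le : Ideal.span {X i - C (a i)} ≤ RingHom.ker (eval a) := by
    simp [Ideal.span_le, RingHom.mem_ker]
  have coprime : IsCoprime (Ideal.span {X i - C (a i)}) (RingHom.ker (eval b)) :=
    isCoprime_span_singleton_ker_eval (by simpa [sub_eq_zero] using hi.symm)
  exact Ideal.isCoprime_iff_sup_eq.2
    (top_unique (coprime.sup_eq.ge.trans (sup_le_sup_right span_le _)))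

lemma exists_coeff_translate [Finite σ] (a : σ → K) {m : ℕ}
    (w : {d : σ →₀ ℕ // d.degree < m} → K) :
    ∃ p, ∀ d : {d : σ →₀ ℕ // d.degree < m}, coeff d.1 (translate a p) = w d := by
  classical
  have := Fintype.ofFinite {d : σ →₀ ℕ // d.degree < m}
  obtain ⟨p, hp⟩ := (translate a).surjective (∑ d, monomial d.1 (w d))
  refine ⟨p, fun d => ?_⟩
  simp [hp, coeff_sum, coeff_monomial, Subtype.val_inj]

lemma jet_surjective [Finite σ] [Finite ι] {A : ι → σ → K} (hA : Function.Injective A) (m : ι → ℕ) :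
    Function.Surjective (jet A m) := by
  intro w
  choose f hf using fun k => exists_coeff_translate (A k) (w k)
  obtain ⟨p, hp⟩ := Ideal.exists_forall_sub_mem_ideal
    (fun k l hkl => (isCoprime_ker_eval (hA.ne hkl)).pow) f
  refine ⟨p, funext fun k => funext fun d => ?_⟩
  have := mem_ker_eval_pow_iff.1 (hp k) d d.2
  rw [map_sub, coeff_sub, sub_eq_zero] at this
  exact this.trans (hf k d)

lemma ImposesIndependentConditions.mono {I J : Ideal (MvPolynomial σ K)} {n : ℕ}
    (h : ImposesIndependentConditions I n) (hIJ : I ≤ J) : ImposesIndependentConditions J n :=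
  fun f => (h f).imp fun _ hp => ⟨hp.1, hIJ hp.2⟩

-- The Horace method: interpolate first along the curve `q = 0`, then correct by a multiple of `q`.
lemma ImposesIndependentConditions.of_sup_of_colon {I : Ideal (MvPolynomial σ K)}
    {q : MvPolynomial σ K} {n d : ℕ} (hq : q.totalDegree ≤ d)
    (hsup : ImposesIndependentConditions (I ⊔ Ideal.span {q}) (n + d))
    (hcolon : ImposesIndependentConditions (I.colon {q}) n) :
    ImposesIndependentConditions I (n + d) := by
  intro f
  obtain ⟨p, hp, hfp⟩ := hsup f
  obtain ⟨g, i, hi, hgi⟩ := Ideal.mem_span_singleton_sup.1 (sup_comm I _ ▸ hfp)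
  obtain ⟨r, hr, hgr⟩ := hcolon g
  refine ⟨p + r * q, (totalDegree_add _ _).trans (max_le hp ?_), ?_⟩
  · exact (totalDegree_mul _ _).trans (add_le_add hr hq)
  · rw [show f - (p + r * q) = (g - r) * q + i by linear_combination -hgi]
    exact add_mem (Submodule.mem_colon_singleton.1 hgr) hi

section Curves

variable [DecidableEq K]

/-- The total multiplicity of the nodes lying on the curve `q = 0`. -/
noncomputable def multiplicityOn [Fintype ι] (A : ι → σ → K) (m : ι → ℕ)
    (q : MvPolynomial σ K) : ℕ :=
  ∑ k with eval (A k) q = 0, m k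

/-- The multiplicities `m`, set to zero at the nodes off the curve `q = 0`. -/
noncomputable def restriction (A : ι → σ → K) (q : MvPolynomial σ K) (m : ι → ℕ) (k : ι) : ℕ :=
  if eval (A k) q = 0 then m k else 0

/-- The multiplicities that are left after dividing by the equation of the curve `q = 0`. -/
noncomputable def residual (A : ι → σ → K) (q : MvPolynomial σ K) (m : ι → ℕ) (k : ι) : ℕ :=
  if eval (A k) q = 0 then m k - 1 else m k

lemma fatPointIdeal_residual_le_colon (A : ι → σ → K) (q : MvPolynomial σ K) (m : ι → ℕ) :
    fatPointIdeal A (residual A q m) ≤ (fatPointIdeal A m).colon {q} := by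
  intro p hp
  refine Submodule.mem_colon_singleton.2 (mem_fatPointIdeal.2 fun k => ?_)
  have hpk := mem_fatPointIdeal.1 hp k
  rw [residual] at hpk
  split_ifs at hpk with hk
  · have hpq := Ideal.mul_mem_mul hpk (show q ∈ RingHom.ker (eval (A k)) from hk)
    rw [← pow_succ] at hpq
    exact Ideal.pow_le_pow_right (Nat.le_add_of_sub_le le_rfl) hpq
  · exact Ideal.mul_mem_right _ _ hpk

lemma fatPointIdeal_restriction_le_sup [Finite ι] (A : ι → σ → K) (q : MvPolynomial σ K)
    (m : ι → ℕ) :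
    fatPointIdeal A (restriction A q m) ≤ fatPointIdeal A m ⊔ Ideal.span {q} := by
  intro p hp
  have coprime : IsCoprime (Ideal.span {q})
      (fatPointIdeal A fun k => if eval (A k) q = 0 then 0 else m k) := by
    have := Fintype.ofFinite ι
    rw [fatPointIdeal, ← Finset.inf_univ_eq_iInf, Finset.inf_eq_iInf]
    refine Ideal.isCoprime_biInf fun k _ => ?_
    split_ifs with hk
    · exact isCoprime_one_right
    · exact (isCoprime_span_singleton_ker_eval hk).pow_right
  obtain ⟨a, ha, b, hb, hab⟩ := Ideal.isCoprime_iff_exists.1 coprime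
  have hpb : p * b ∈ fatPointIdeal A m := by
    refine mem_fatPointIdeal.2 fun k => ?_
    have hpk := mem_fatPointIdeal.1 hp k
    have hbk := mem_fatPointIdeal.1 hb k
    rw [restriction] at hpk
    split_ifs at hpk hbk with hk
    · exact Ideal.mul_mem_right _ _ hpk
    · exact Ideal.mul_mem_left _ _ hbk
  rw [← mul_one p, ← hab, mul_add, add_comm]
  exact Submodule.add_mem_sup hpb (Ideal.mul_mem_left _ _ ha)

lemma ImposesIndependentConditions.of_residual [Finite ι] {A : ι → σ → K} {m : ι → ℕ}
    {q : MvPolynomial σ K} {n d : ℕ} (hq : q.totalDegree ≤ d)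
    (hres : ImposesIndependentConditions (fatPointIdeal A (residual A q m)) n)
    (hcurve : ImposesIndependentConditions
      (fatPointIdeal A (restriction A q m) ⊔ Ideal.span {q}) (n + d)) :
    ImposesIndependentConditions (fatPointIdeal A m) (n + d) :=
  .of_sup_of_colon hq
    (hcurve.mono (sup_le (fatPointIdeal_restriction_le_sup A q m) le_sup_right))
    (hres.mono (fatPointIdeal_residual_le_colon A q m))

lemma sum_choose_residual_add_multiplicityOn [Fintype ι] (A : ι → σ → K) (m : ι → ℕ)
    (q : MvPolynomial σ K) :
    ∑ k, (residual A q m k + 1).choose 2 + multiplicityOn A m q = ∑ k, (m k + 1).choose 2 := by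
  rw [multiplicityOn, Finset.sum_filter, ← Finset.sum_add_distrib]
  refine Finset.sum_congr rfl fun k _ => ?_
  rw [residual]
  split_ifs
  · cases m k with
    | zero => rfl
    | succ a => rw [Nat.add_sub_cancel, Nat.choose_succ_succ' (a + 1) 1, Nat.choose_one_right,
      add_comm]
  · rfl

end Curves

end FatPoints

section Necessity

variable {σ ι K : Type*} [Field K]

/-- Evaluation of the jets of the polynomials of degree at most `n`. -/
noncomputable def jetRestrict (A : ι → σ → K) (m : ι → ℕ) (n : ℕ) :
    restrictTotalDegree σ K n →ₗ[K] ∀ k, {d : σ →₀ ℕ // d.degree < m k} → K :=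
  (jet A m).domRestrict _

lemma ImposesIndependentConditions.jetRestrict_surjective [Finite σ] [Finite ι]
    {A : ι → σ → K} (hA : Function.Injective A) {m : ι → ℕ} {n : ℕ}
    (h : ImposesIndependentConditions (fatPointIdeal A m) n) :
    Function.Surjective (jetRestrict A m n) := by
  intro w
  obtain ⟨f, rfl⟩ := jet_surjective hA m w
  obtain ⟨p, hp, hfp⟩ := h f
  exact ⟨⟨p, (mem_restrictTotalDegree _ _ _).2 hp⟩, (jet_eq_iff.2 hfp).symm⟩

lemma finrank_ker_residual_le [Finite σ] [DecidableEq K] {q : MvPolynomial σ K} (hq : q ≠ 0)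
    (A : ι → σ → K) (m : ι → ℕ) (n : ℕ) :
    Module.finrank K (LinearMap.ker (jetRestrict A (residual A q m) n)) ≤
      Module.finrank K (LinearMap.ker (jetRestrict A m (n + q.totalDegree))) := by
  have map_mem (p : MvPolynomial σ K) (hp : p ∈ restrictTotalDegree σ K n) :
      LinearMap.mulRight K q p ∈ restrictTotalDegree σ K (n + q.totalDegree) := by
    rw [mem_restrictTotalDegree] at hp ⊢
    exact (totalDegree_mul _ _).trans (Nat.add_le_add_right hp _)
  have map_ker (p) (hp : p ∈ LinearMap.ker (jetRestrict A (residual A q m) n)) :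
      (LinearMap.mulRight K q).restrict map_mem p ∈
        LinearMap.ker (jetRestrict A m (n + q.totalDegree)) := by
    replace hp : p.1 ∈ LinearMap.ker (jet A (residual A q m)) := hp
    change p.1 * q ∈ LinearMap.ker (jet A m)
    rw [ker_jet, Submodule.restrictScalars_mem] at hp ⊢
    exact Submodule.mem_colon_singleton.1 (fatPointIdeal_residual_le_colon A q m hp)
  refine LinearMap.finrank_le_finrank_of_injective
    (f := ((LinearMap.mulRight K q).restrict map_mem).restrict map_ker) fun x y hxy => ?_
  have mul_eq : x.1.1 * q = y.1.1 * q := congr($hxy.1.1)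
  exact Subtype.ext (Subtype.ext (mul_right_cancel₀ hq mul_eq))

variable [Fintype ι]

lemma finrank_jets (m : ι → ℕ) :
    Module.finrank K (∀ k, {d : Fin 2 →₀ ℕ // d.degree < m k} → K) = ∑ k, (m k + 1).choose 2 := by
  have (k : ι) := Fintype.ofFinite {d : Fin 2 →₀ ℕ // d.degree < m k}
  rw [Module.finrank_pi_fintype]
  refine Finset.sum_congr rfl fun k _ => ?_
  rw [Module.finrank_fintype_fun_eq_card, ← card_degree_lt, Nat.card_eq_fintype_card]

lemma ImposesIndependentConditions.sum_choose_add_finrank_ker {A : ι → Fin 2 → K}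
    (hA : Function.Injective A) {m : ι → ℕ} {n : ℕ}
    (h : ImposesIndependentConditions (fatPointIdeal A m) n) :
    ∑ k, (m k + 1).choose 2 + Module.finrank K (LinearMap.ker (jetRestrict A m n)) =
      (n + 2).choose 2 := by
  have rank_nullity := (jetRestrict A m n).finrank_range_add_finrank_ker
  rwa [LinearMap.range_eq_top.2 (h.jetRestrict_surjective hA), finrank_top, finrank_jets,
    finrank_restrictTotalDegree] at rank_nullity

lemma choose_le_sum_choose_add_finrank_ker (A : ι → Fin 2 → K) (m : ι → ℕ) (n : ℕ) :
    (n + 2).choose 2 ≤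
      ∑ k, (m k + 1).choose 2 + Module.finrank K (LinearMap.ker (jetRestrict A m n)) := by
  have rank_nullity := (jetRestrict A m n).finrank_range_add_finrank_ker
  have range_le := (LinearMap.range (jetRestrict A m n)).finrank_le
  rw [finrank_jets] at range_le
  rw [finrank_restrictTotalDegree] at rank_nullity
  lia

variable [DecidableEq K]

lemma ImposesIndependentConditions.multiplicityOn_add_choose_le {A : ι → Fin 2 → K}
    (hA : Function.Injective A) {m : ι → ℕ} {n : ℕ} {q : MvPolynomial (Fin 2) K} (hq : q ≠ 0)
    (h : ImposesIndependentConditions (fatPointIdeal A m) n) :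
    multiplicityOn A m q + (n + 2 - q.totalDegree).choose 2 ≤ (n + 2).choose 2 := by
  have residual_sum := sum_choose_residual_add_multiplicityOn A m q
  have dim_ker := h.sum_choose_add_finrank_ker hA
  by_cases hd : q.totalDegree ≤ n
  · have dim_ker_residual :=
      choose_le_sum_choose_add_finrank_ker A (residual A q m) (n - q.totalDegree)
    have ker_le := finrank_ker_residual_le hq A m (n - q.totalDegree)
    rw [Nat.sub_add_cancel hd] at ker_le
    rw [← Nat.sub_add_comm hd] at dim_ker_residual
    lia
  · rw [Nat.choose_eq_zero_of_lt (show n + 2 - q.totalDegree < 2 by lia)]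
    lia

end Necessity

section Lines

lemma totalDegree_aeval_le {σ R : Type*} [CommSemiring R] (p : MvPolynomial σ R)
    (u : Polynomial R) :
    (Polynomial.aeval p u).totalDegree ≤ u.natDegree * p.totalDegree := by
  rw [Polynomial.aeval_eq_sum_range]
  refine totalDegree_finsetSum_le fun i hi => (totalDegree_smul_le _ _).trans ?_
  exact (totalDegree_pow _ _).trans (Nat.mul_le_mul_right _ (Finset.mem_range_succ_iff.1 hi))

lemma eq_C_add_sum_of_totalDegree_le_one {σ R : Type*} [Fintype σ] [CommSemiring R]
    {p : MvPolynomial σ R} (hp : p.totalDegree ≤ 1) :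
    p = C (coeff 0 p) + ∑ i, C (coeff (Finsupp.single i 1) p) * X i := by
  classical
  ext d
  simp only [coeff_add, coeff_C, coeff_sum, coeff_C_mul, coeff_X, mul_ite, mul_one, mul_zero]
  rcases lt_trichotomy d.degree 1 with hd | hd | hd
  · obtain rfl := (Finsupp.degree_eq_zero_iff d).1 (Nat.lt_one_iff.1 hd)
    simp
  · obtain ⟨i, rfl⟩ : ∃ i, d = Finsupp.single i 1 := by
      have : d ∈ Set.range fun i => Finsupp.single i 1 := by rw [Finsupp.range_single_one]; exact hd
      exact this.imp fun _ h => h.symm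
    simp [Finsupp.single_left_inj, eq_comm]
  · rw [coeff_eq_zero_of_totalDegree_lt (hp.trans_lt hd), if_neg (by rintro rfl; simp at hd),
      Finset.sum_eq_zero fun i _ => if_neg (by rintro rfl; simp at hd), add_zero]

variable {ι K : Type*} [Field K]

-- A coordinate that is not constant on the line parametrizes it.
lemma exists_aeval_sub_mem_span {ℓ : MvPolynomial (Fin 2) K} (hℓ : ℓ.totalDegree = 1) :
    ∃ i, ∀ f, ∃ u : Polynomial K, f - Polynomial.aeval (X i) u ∈ Ideal.span {ℓ} := by
  obtain ⟨i, hi⟩ : ∃ i, coeff (Finsupp.single i 1) ℓ ≠ 0 := by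
    by_contra! h
    rw [eq_C_add_sum_of_totalDegree_le_one hℓ.le] at hℓ
    simp [h] at hℓ
  have line_eq : ℓ = C (coeff 0 ℓ) + C (coeff (Finsupp.single i.rev 1) ℓ) * X i.rev +
      C (coeff (Finsupp.single i 1) ℓ) * X i := by
    conv_lhs => rw [eq_C_add_sum_of_totalDegree_le_one hℓ.le, Fin.sum_univ_two]
    fin_cases i
    · exact (add_assoc _ _ _).symm.trans (add_right_comm _ _ _)
    · exact (add_assoc _ _ _).symm
  generalize coeff 0 ℓ = c, coeff (Finsupp.single i.rev 1) ℓ = b, coeff (Finsupp.single i 1) ℓ = a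
    at line_eq hi
  let S : Subalgebra K (MvPolynomial (Fin 2) K) :=
    ((Ideal.Quotient.mkₐ K (Ideal.span {ℓ})).comp (Polynomial.aeval (X i.rev))).range.comap
      (Ideal.Quotient.mkₐ K (Ideal.span {ℓ}))
  have mem_S {f : MvPolynomial (Fin 2) K} :
      f ∈ S ↔ ∃ u : Polynomial K, Polynomial.aeval (X i.rev) u - f ∈ Ideal.span {ℓ} :=
    exists_congr fun u => Ideal.Quotient.eq
  have X_rev_mem : X i.rev ∈ S := mem_S.2 ⟨Polynomial.X, by simp⟩
  have X_mem : X i ∈ S := by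
    refine mem_S.2 ⟨Polynomial.C (-a⁻¹ * c) - Polynomial.C (a⁻¹ * b) * Polynomial.X,
      Ideal.mem_span_singleton.2 ⟨-C a⁻¹, ?_⟩⟩
    have inv_mul : (C a⁻¹ * C a : MvPolynomial (Fin 2) K) = 1 := by
      rw [← C_mul, inv_mul_cancel₀ hi, C_1]
    simp only [map_sub, map_mul, Polynomial.aeval_C, Polynomial.aeval_X, algebraMap_eq, map_neg]
    linear_combination C a⁻¹ * line_eq + X i * inv_mul
  have S_eq_top : S = ⊤ := by
    rw [← top_le_iff, ← adjoin_range_X, Algebra.adjoin_le_iff, Set.range_subset_iff]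
    fin_cases i
    exacts [Fin.forall_fin_two.2 ⟨X_mem, X_rev_mem⟩, Fin.forall_fin_two.2 ⟨X_rev_mem, X_mem⟩]
  refine ⟨i.rev, fun f => ?_⟩
  obtain ⟨u, hu⟩ := mem_S.1 (S_eq_top ▸ Algebra.mem_top : f ∈ S)
  exact ⟨u, by rw [← neg_sub]; exact neg_mem hu⟩

variable [Fintype ι] [DecidableEq K]

lemma imposesIndependentConditions_restriction_sup_span {A : ι → Fin 2 → K} {m : ι → ℕ} {n : ℕ}
    {ℓ : MvPolynomial (Fin 2) K} (hℓ : ℓ.totalDegree = 1) (hm : multiplicityOn A m ℓ ≤ n + 1) :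
    ImposesIndependentConditions (fatPointIdeal A (restriction A ℓ m) ⊔ Ideal.span {ℓ}) n := by
  intro f
  obtain ⟨i, hi⟩ := exists_aeval_sub_mem_span hℓ
  obtain ⟨u, hu⟩ := hi f
  let D : Polynomial K :=
    ∏ k with eval (A k) ℓ = 0, (Polynomial.X - Polynomial.C (A k i)) ^ m k
  have monic (k : ι) : ((Polynomial.X - Polynomial.C (A k i)) ^ m k).Monic :=
    (Polynomial.monic_X_sub_C _).pow _
  have D_monic : D.Monic := Polynomial.monic_prod_of_monic _ _ fun k _ => monic k
  have natDegree_D : D.natDegree = multiplicityOn A m ℓ := by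
    simp [D, multiplicityOn, Polynomial.natDegree_prod_of_monic _ _ fun k _ => monic k]
  have D_mem : Polynomial.aeval (X i) D ∈ fatPointIdeal A (restriction A ℓ m) := by
    refine mem_fatPointIdeal.2 fun k => ?_
    rw [restriction]
    split_ifs with hk
    · have dvd_D := map_dvd (Polynomial.aeval (X i : MvPolynomial (Fin 2) K))
        (Finset.dvd_prod_of_mem _ (Finset.mem_filter_univ k |>.2 hk) :
          (Polynomial.X - Polynomial.C (A k i)) ^ m k ∣ D)
      rw [map_pow] at dvd_D
      exact Ideal.mem_of_dvd _ dvd_D (Ideal.pow_mem_pow (by simp [RingHom.mem_ker]) _)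
    · simp
  refine ⟨Polynomial.aeval (X i) (u %ₘ D), (totalDegree_aeval_le _ _).trans ?_, ?_⟩
  · rw [totalDegree_X, mul_one]
    by_cases hD : D = 1
    · simp [hD]
    · have := Polynomial.natDegree_modByMonic_lt u D_monic hD
      lia
  · have division : Polynomial.aeval (X i : MvPolynomial (Fin 2) K) (u %ₘ D) +
        Polynomial.aeval (X i) D * Polynomial.aeval (X i) (u /ₘ D) = Polynomial.aeval (X i) u := by
      rw [← map_mul, ← map_add, Polynomial.modByMonic_add_div]
    rw [show f - Polynomial.aeval (X i) (u %ₘ D) = Polynomial.aeval (X i) D *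
      Polynomial.aeval (X i) (u /ₘ D) + (f - Polynomial.aeval (X i) u) by
        linear_combination -division]
    exact Submodule.add_mem_sup (Ideal.mul_mem_right _ _ D_mem) hu

lemma ImposesIndependentConditions.of_residual_line {A : ι → Fin 2 → K} {m : ι → ℕ} {n : ℕ}
    {ℓ : MvPolynomial (Fin 2) K} (hℓ : ℓ.totalDegree = 1) (hm : multiplicityOn A m ℓ ≤ n + 2)
    (hres : ImposesIndependentConditions (fatPointIdeal A (residual A ℓ m)) n) :
    ImposesIndependentConditions (fatPointIdeal A m) (n + 1) :=
  .of_residual hℓ.le hres (imposesIndependentConditions_restriction_sup_span hℓ hm)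

end Lines

lemma exists_curve_through {K : Type*} [Field K] {d : ℕ} (S : Finset (Fin 2 → K))
    (hS : S.card < (d + 2).choose 2) :
    ∃ q : MvPolynomial (Fin 2) K, q ≠ 0 ∧ q.totalDegree = d ∧ ∀ a ∈ S, eval a q = 0 := by
  let evalOn : restrictTotalDegree (Fin 2) K d →ₗ[K] S → K :=
    (LinearMap.pi fun a : S =>
      (aeval a.1 : MvPolynomial (Fin 2) K →ₐ[K] K).toLinearMap).domRestrict _
  have ker_ne_bot : LinearMap.ker evalOn ≠ ⊥ := by
    refine LinearMap.ker_ne_bot_of_finrank_lt ?_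
    rwa [Module.finrank_fintype_fun_eq_card, Fintype.card_coe, finrank_restrictTotalDegree]
  obtain ⟨⟨p, p_deg⟩, p_ker, p_ne⟩ := Submodule.exists_mem_ne_zero_of_ne_bot ker_ne_bot
  replace p_ne : p ≠ 0 := fun h => p_ne (Subtype.ext h)
  rw [mem_restrictTotalDegree] at p_deg
  refine ⟨p * X 0 ^ (d - p.totalDegree), mul_ne_zero p_ne (pow_ne_zero _ (X_ne_zero 0)), ?_,
    fun a ha => ?_⟩
  · rw [totalDegree_mul_of_isDomain p_ne (pow_ne_zero _ (X_ne_zero 0)), totalDegree_X_pow]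
    lia
  · have eval_p : eval a p = 0 := congr_fun p_ker ⟨a, ha⟩
    rw [map_mul, eval_p, zero_mul]

lemma exists_line_through {K : Type*} [Field K] (a b : Fin 2 → K) :
    ∃ ℓ : MvPolynomial (Fin 2) K,
      ℓ ≠ 0 ∧ ℓ.totalDegree = 1 ∧ eval a ℓ = 0 ∧ eval b ℓ = 0 := by
  classical
  obtain ⟨ℓ, ℓ_ne, ℓ_deg, hℓ⟩ := exists_curve_through (d := 1) {a, b}
    (Finset.card_le_two.trans_lt (by decide))
  exact ⟨ℓ, ℓ_ne, ℓ_deg, hℓ a (by simp), hℓ b (by simp)⟩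

section Counting

variable {σ ι K : Type*} [Field K] [DecidableEq K] {A : ι → σ → K} {m m' : ι → ℕ}
  {q t : MvPolynomial σ K}

lemma residual_le : residual A q m ≤ m := fun k => by
  rw [residual]
  split_ifs <;> lia

lemma restriction_le : restriction A q m ≤ m := fun k => by
  rw [restriction]
  split_ifs <;> lia

variable [Fintype ι]

/-- The nodes of nonzero multiplicity on the curve `q = 0`. -/
noncomputable def nodesOn (A : ι → σ → K) (m : ι → ℕ) (q : MvPolynomial σ K) : Finset ι :=
  {k | eval (A k) q = 0 ∧ m k ≠ 0}

/-- Every curve of degree `d` carries nodes of total multiplicity at most `N`. -/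
def CurveMultiplicityLE (A : ι → σ → K) (m : ι → ℕ) (d N : ℕ) : Prop :=
  ∀ q : MvPolynomial σ K, q ≠ 0 → q.totalDegree = d → multiplicityOn A m q ≤ N

lemma mem_nodesOn {k : ι} : k ∈ nodesOn A m q ↔ eval (A k) q = 0 ∧ m k ≠ 0 :=
  Finset.mem_filter_univ k

lemma sum_nodesOn : ∑ k ∈ nodesOn A m q, m k = multiplicityOn A m q := by
  rw [nodesOn, ← Finset.filter_filter, Finset.sum_filter_ne_zero, multiplicityOn]

lemma sum_restriction : ∑ k, restriction A q m k = multiplicityOn A m q :=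
  (Finset.sum_filter _ _).symm

lemma sum_residual_add_card_nodesOn :
    ∑ k, residual A q m k + (nodesOn A m q).card = ∑ k, m k := by
  rw [nodesOn, Finset.card_filter, ← Finset.sum_add_distrib]
  refine Finset.sum_congr rfl fun k _ => ?_
  rw [residual]
  split_ifs <;> grind

lemma multiplicityOn_mono (h : m ≤ m') : multiplicityOn A m q ≤ multiplicityOn A m' q :=
  Finset.sum_le_sum fun k _ => h k

lemma multiplicityOn_le_sum : multiplicityOn A m q ≤ ∑ k, m k :=
  Finset.sum_le_sum_of_subset (Finset.filter_subset _ _)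

lemma multiplicityOn_lt_sum_iff :
    multiplicityOn A m q < ∑ k, m k ↔ ∃ k, eval (A k) q ≠ 0 ∧ m k ≠ 0 := by
  rw [← Finset.sum_filter_add_sum_filter_not Finset.univ (fun k => eval (A k) q = 0) m,
    multiplicityOn, Nat.lt_add_right_iff_pos, Finset.sum_pos_iff]
  simp [Nat.pos_iff_ne_zero]

lemma multiplicityOn_residual_lt (h : ¬ Disjoint (nodesOn A m q) (nodesOn A m t)) :
    multiplicityOn A (residual A q m) t < multiplicityOn A m t := by
  obtain ⟨k, hq, ht⟩ := Finset.not_disjoint_iff.1 h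
  rw [mem_nodesOn] at hq ht
  refine Finset.sum_lt_sum (fun k _ => residual_le k) ⟨k, by simp [ht.1], ?_⟩
  rw [residual, if_pos hq.1]
  lia

lemma multiplicityOn_add_le_of_disjoint (h : Disjoint (nodesOn A m q) (nodesOn A m t)) :
    multiplicityOn A m q + multiplicityOn A m t ≤ multiplicityOn A m (q * t) := by
  rw [← sum_nodesOn (q := q), ← sum_nodesOn (q := t), ← Finset.sum_disjUnion h, multiplicityOn]
  refine Finset.sum_le_sum_of_subset fun k hk => ?_
  rcases Finset.mem_disjUnion.1 hk with hk | hk <;> simp [(mem_nodesOn.1 hk).1]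

lemma CurveMultiplicityLE.residual_of_meet {d N : ℕ} (h : CurveMultiplicityLE A m d (N + 1))
    (meet : ∀ t : MvPolynomial σ K, t ≠ 0 → t.totalDegree = d → multiplicityOn A m t = N + 1 →
      ¬ Disjoint (nodesOn A m q) (nodesOn A m t)) :
    CurveMultiplicityLE A (residual A q m) d N := by
  intro t t_ne t_deg
  rcases (h t t_ne t_deg).lt_or_eq with ht | ht
  · exact (multiplicityOn_mono residual_le).trans (Nat.lt_succ_iff.1 ht)
  · exact Nat.lt_succ_iff.1 ((multiplicityOn_residual_lt (meet t t_ne t_deg ht)).trans_eq ht)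

lemma CurveMultiplicityLE.mono {d N : ℕ} (h : CurveMultiplicityLE A m' d N) (hm : m ≤ m') :
    CurveMultiplicityLE A m d N :=
  fun t t_ne t_deg => (multiplicityOn_mono hm).trans (h t t_ne t_deg)

lemma CurveMultiplicityLE.residual_of_two_le {d N N' : ℕ} (h : CurveMultiplicityLE A m d N)
    (hm : N < ∑ k, m k) (hm' : ∑ k, residual A q m k ≤ N' + 1)
    (two_le : ∀ k ∈ nodesOn A m q, 2 ≤ m k) : CurveMultiplicityLE A (residual A q m) d N' := by
  intro t t_ne t_deg
  obtain ⟨k, hkt, hk⟩ := multiplicityOn_lt_sum_iff.1 ((h t t_ne t_deg).trans_lt hm)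
  have residual_ne : residual A q m k ≠ 0 := by
    rw [residual]
    split_ifs with hkq
    · have := two_le k (mem_nodesOn.2 ⟨hkq, hk⟩)
      lia
    · exact hk
  exact Nat.lt_succ_iff.1 ((multiplicityOn_lt_sum_iff.2 ⟨k, hkt, residual_ne⟩).trans_le hm')

lemma exists_card_eq_forall_le {ι α : Type*} [Fintype ι] [LinearOrder α] (f : ι → α) {c : ℕ}
    (hc : c ≤ Fintype.card ι) :
    ∃ F : Finset ι, F.card = c ∧ ∀ x ∈ F, ∀ y ∉ F, f y ≤ f x := by
  classical
  induction c with
  | zero => exact ⟨∅, by simp⟩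
  | succ c ih =>
    obtain ⟨F, hF, F_max⟩ := ih (by lia)
    have compl_nonempty : Fᶜ.Nonempty := by
      rw [← Finset.card_pos, Finset.card_compl]
      lia
    obtain ⟨z, hz, z_max⟩ := Finset.exists_max_image Fᶜ f compl_nonempty
    refine ⟨insert z F, by rw [Finset.card_insert_of_notMem (Finset.mem_compl.1 hz), hF], ?_⟩
    simp only [Finset.mem_insert, not_or]
    rintro x (rfl | hx) y ⟨-, hy⟩
    · exact z_max y (Finset.mem_compl.2 hy)
    · exact F_max x hx y hy

end Counting

section Sufficiency

variable {ι K : Type*} [Field K] [Fintype ι] {A : ι → Fin 2 → K}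

lemma ker_eval_le_fatPointIdeal {m : ι → ℕ} {k : ι} (hk : m k ≠ 0) (hm : ∑ j, m j ≤ 1) :
    RingHom.ker (eval (A k)) ≤ fatPointIdeal A m := by
  classical
  rw [← Finset.add_sum_erase _ _ (Finset.mem_univ k)] at hm
  refine le_iInf fun j => ?_
  by_cases hj : j = k
  · rw [hj, show m k = 1 by lia, pow_one]
  · have sum_eq_zero : ∑ j ∈ Finset.univ.erase k, m j = 0 := by lia
    rw [Finset.sum_eq_zero_iff.1 sum_eq_zero j (by simp [hj]), pow_zero, Ideal.one_eq_top]
    exact le_top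

lemma imposesIndependentConditions_of_sum_le {n : ℕ} {m : ι → ℕ} (hm : ∑ k, m k ≤ n + 1) :
    ImposesIndependentConditions (fatPointIdeal A m) n := by
  classical
  induction n generalizing m with
  | zero =>
    by_cases! h : ∀ k, m k = 0
    · exact imposesIndependentConditions_of_forall_eq_zero h
    · obtain ⟨k, hk⟩ := h
      exact fun f => ⟨C (eval (A k) f), by simp,
        ker_eval_le_fatPointIdeal hk hm (by simp [RingHom.mem_ker])⟩
  | succ n ih =>
    by_cases! h : ∀ k, m k = 0
    · exact imposesIndependentConditions_of_forall_eq_zero h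
    · obtain ⟨k, hk⟩ := h
      obtain ⟨ℓ, -, ℓ_deg, hℓ, -⟩ := exists_line_through (A k) (A k)
      have nonempty : (nodesOn A m ℓ).Nonempty := ⟨k, mem_nodesOn.2 ⟨hℓ, hk⟩⟩
      have sum_residual := sum_residual_add_card_nodesOn (A := A) (m := m) (q := ℓ)
      have := nonempty.card_pos
      exact .of_residual_line ℓ_deg (multiplicityOn_le_sum.trans hm) (ih (by lia))

variable [DecidableEq K]

lemma two_le_card_nodesOn {m : ι → ℕ} {ℓ : MvPolynomial (Fin 2) K}
    (maximal : CurveMultiplicityLE A m 1 (multiplicityOn A m ℓ))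
    (hℓ : multiplicityOn A m ℓ < ∑ k, m k) : 2 ≤ (nodesOn A m ℓ).card := by
  classical
  by_contra! card_lt
  obtain ⟨y, y_off, hy⟩ := multiplicityOn_lt_sum_iff.1 hℓ
  have : Nonempty ι := ⟨y⟩
  obtain ⟨x, hx⟩ := Finset.card_le_one_iff_subset_singleton.1 (Nat.lt_succ_iff.1 card_lt)
  obtain ⟨t, t_ne, t_deg, hxt, hyt⟩ := exists_line_through (A x) (A y)
  have insert_subset : insert y (nodesOn A m ℓ) ⊆ ({k | eval (A k) t = 0} : Finset ι) := by
    refine Finset.insert_subset (by simpa using hyt) (hx.trans ?_)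
    simpa using hxt
  have sum_le : ∑ k ∈ insert y (nodesOn A m ℓ), m k ≤ multiplicityOn A m t :=
    Finset.sum_le_sum_of_subset insert_subset
  rw [Finset.sum_insert fun h => y_off (mem_nodesOn.1 h).1, sum_nodesOn] at sum_le
  have := maximal t t_ne t_deg
  lia

lemma exists_line_multiplicityOn_max (A : ι → Fin 2 → K) (m : ι → ℕ) :
    ∃ ℓ : MvPolynomial (Fin 2) K, ℓ ≠ 0 ∧ ℓ.totalDegree = 1 ∧
      CurveMultiplicityLE A m 1 (multiplicityOn A m ℓ) := by
  let S : Set (MvPolynomial (Fin 2) K) := {ℓ | ℓ ≠ 0 ∧ ℓ.totalDegree = 1}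
  have bounded : BddAbove (multiplicityOn A m '' S) :=
    ⟨∑ k, m k, Set.forall_mem_image.2 fun _ _ => multiplicityOn_le_sum⟩
  have nonempty : S.Nonempty := ⟨X 0, X_ne_zero 0, totalDegree_X 0⟩
  obtain ⟨_, ⟨ℓ, hℓ, rfl⟩, maximal⟩ := bounded.exists_isGreatest_of_nonempty (nonempty.image _)
  exact ⟨ℓ, hℓ.1, hℓ.2, fun t t_ne t_deg => maximal ⟨t, ⟨t_ne, t_deg⟩, rfl⟩⟩

lemma imposesIndependentConditions_of_sum_le_two_mul {n : ℕ} {m : ι → ℕ} (hm : ∑ k, m k ≤ 2 * n + 1)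
    (hlines : CurveMultiplicityLE A m 1 (n + 1)) :
    ImposesIndependentConditions (fatPointIdeal A m) n := by
  induction n generalizing m with
  | zero => exact imposesIndependentConditions_of_sum_le hm
  | succ n ih =>
    by_cases few : ∑ k, m k ≤ n + 2
    · exact imposesIndependentConditions_of_sum_le few
    obtain ⟨ℓ, ℓ_ne, ℓ_deg, maximal⟩ := exists_line_multiplicityOn_max A m
    have hℓ := hlines ℓ ℓ_ne ℓ_deg
    have card_nodes := two_le_card_nodesOn maximal (by lia)
    have sum_residual := sum_residual_add_card_nodesOn (A := A) (m := m) (q := ℓ)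
    refine .of_residual_line ℓ_deg hℓ (ih (by lia) ?_)
    refine hlines.residual_of_meet fun t t_ne t_deg ht disjoint => ?_
    have := maximal t t_ne t_deg
    have := (multiplicityOn_add_le_of_disjoint disjoint).trans multiplicityOn_le_sum
    lia

lemma ImposesIndependentConditions.of_line_of_three_le_card {n : ℕ} {m : ι → ℕ}
    {ℓ : MvPolynomial (Fin 2) K} (hm : ∑ k, m k ≤ 2 * n + 4) (hℓ : ℓ.totalDegree = 1)
    (hmℓ : multiplicityOn A m ℓ ≤ n + 2) (card_nodes : 3 ≤ (nodesOn A m ℓ).card)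
    (hlines : CurveMultiplicityLE A (residual A ℓ m) 1 (n + 1)) :
    ImposesIndependentConditions (fatPointIdeal A m) (n + 1) := by
  have sum_residual := sum_residual_add_card_nodesOn (A := A) (m := m) (q := ℓ)
  exact .of_residual_line hℓ hmℓ (imposesIndependentConditions_of_sum_le_two_mul (by lia) hlines)

lemma self_le_choose_two (a : ℕ) : a ≤ (a + 1).choose 2 := by
  rw [Nat.choose_succ_succ' a 1, Nat.choose_one_right]
  exact Nat.le_add_right _ _

lemma choose_add_sum_le_sum_choose_add (m : ι → ℕ) (k : ι) :
    (m k + 1).choose 2 + ∑ j, m j ≤ ∑ j, (m j + 1).choose 2 + m k := by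
  classical
  have others_le : ∑ j ∈ Finset.univ.erase k, m j ≤
      ∑ j ∈ Finset.univ.erase k, (m j + 1).choose 2 :=
    Finset.sum_le_sum fun j _ => self_le_choose_two (m j)
  rw [← Finset.add_sum_erase _ _ (Finset.mem_univ k),
    ← Finset.add_sum_erase _ (fun j => (m j + 1).choose 2) (Finset.mem_univ k)]
  lia

-- Two disjoint lines of multiplicity `n + 1` would form a conic of multiplicity `2 * n + 2`.
lemma CurveMultiplicityLE.residual_of_full {n : ℕ} {m : ι → ℕ} {ℓ : MvPolynomial (Fin 2) K}
    (hlines : CurveMultiplicityLE A m 1 (n + 1)) (hconics : CurveMultiplicityLE A m 2 (2 * n + 1))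
    (ℓ_ne : ℓ ≠ 0) (ℓ_deg : ℓ.totalDegree = 1) (hℓ : multiplicityOn A m ℓ = n + 1) :
    CurveMultiplicityLE A (residual A ℓ m) 1 n := by
  refine hlines.residual_of_meet fun t t_ne t_deg ht disjoint => ?_
  have conic_le := hconics (ℓ * t) (mul_ne_zero ℓ_ne t_ne)
    (by rw [totalDegree_mul_of_isDomain ℓ_ne t_ne, ℓ_deg, t_deg])
  have := multiplicityOn_add_le_of_disjoint disjoint
  lia

lemma two_le_of_card_nodesOn_eq_two {n : ℕ} {m : ι → ℕ} {ℓ : MvPolynomial (Fin 2) K}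
    (hm : ∑ k, m k = 2 * n + 4) (hscheme : ∑ k, (m k + 1).choose 2 ≤ (n + 3).choose 2)
    (hℓ : multiplicityOn A m ℓ = n + 2) (card_nodes : (nodesOn A m ℓ).card = 2) {k : ι}
    (hk : k ∈ nodesOn A m ℓ) : 2 ≤ m k := by
  classical
  by_contra! hlt
  have hk_one : m k = 1 := by have := (mem_nodesOn.1 hk).2; lia
  obtain ⟨j, hj⟩ := Finset.card_eq_one.1
    (show ((nodesOn A m ℓ).erase k).card = 1 by rw [Finset.card_erase_of_mem hk, card_nodes])
  have sum_nodes := Finset.add_sum_erase _ m hk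
  rw [hj, Finset.sum_singleton, sum_nodesOn, hℓ] at sum_nodes
  have hj_eq : m j = n + 1 := by lia
  have choose_le := choose_add_sum_le_sum_choose_add m j
  rw [hj_eq] at choose_le
  have := Nat.choose_succ_succ' (n + 2) 1
  rw [Nat.choose_one_right] at this
  lia

lemma exists_conic_through_heaviest {m : ι → ℕ} {N : ℕ} (hconics : CurveMultiplicityLE A m 2 N)
    (hm : N < ∑ k, m k) :
    ∃ (q : MvPolynomial (Fin 2) K) (F : Finset ι), q ≠ 0 ∧ q.totalDegree = 2 ∧ F.card = 5 ∧
      F ⊆ nodesOn A m q ∧ ∀ x ∈ F, ∀ y ∉ F, m y ≤ m x := by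
  classical
  have exists_conic (F : Finset ι) (hF : F.card ≤ 5) : ∃ q : MvPolynomial (Fin 2) K,
      q ≠ 0 ∧ q.totalDegree = 2 ∧ (∀ x ∈ F, eval (A x) q = 0) ∧
        ∃ k, eval (A k) q ≠ 0 ∧ m k ≠ 0 := by
    obtain ⟨q, q_ne, q_deg, hq⟩ := exists_curve_through (d := 2) (F.image A)
      ((Finset.card_image_le.trans hF).trans_lt (by decide))
    exact ⟨q, q_ne, q_deg, fun x hx => hq _ (Finset.mem_image_of_mem A hx),
      multiplicityOn_lt_sum_iff.1 ((hconics q q_ne q_deg).trans_lt hm)⟩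
  have five_le : 5 ≤ Fintype.card ι := by
    by_contra! hlt
    obtain ⟨q, -, -, hq, k, hk, -⟩ := exists_conic Finset.univ hlt.le
    exact hk (hq k (Finset.mem_univ k))
  obtain ⟨F, F_card, F_max⟩ := exists_card_eq_forall_le m five_le
  obtain ⟨q, q_ne, q_deg, hq, k, hkq, hk⟩ := exists_conic F F_card.le
  have hkF : k ∉ F := fun h => hkq (hq k h)
  refine ⟨q, F, q_ne, q_deg, F_card, fun x hx => mem_nodesOn.2 ⟨hq x hx, ?_⟩, F_max⟩
  exact (Nat.pos_of_ne_zero hk |>.trans_le (F_max x hx k hkF)).ne'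

-- A line disjoint from `F` has at most two nodes, each weighing at most a fifth of `F`.
lemma CurveMultiplicityLE.residual_heaviest {n : ℕ} {m : ι → ℕ} {q : MvPolynomial (Fin 2) K}
    {F : Finset ι} (hm : ∑ k, m k ≤ 2 * n + 6) (hlines : CurveMultiplicityLE A m 1 (n + 2))
    (card_le_two : ∀ ℓ : MvPolynomial (Fin 2) K, ℓ.totalDegree = 1 → (nodesOn A m ℓ).card ≤ 2)
    (F_card : F.card = 5) (F_sub : F ⊆ nodesOn A m q) (F_max : ∀ x ∈ F, ∀ y ∉ F, m y ≤ m x) :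
    CurveMultiplicityLE A (residual A q m) 1 (n + 1) := by
  refine hlines.residual_of_meet fun ℓ _ ℓ_deg hℓ disjoint => ?_
  have disjoint_F : Disjoint F (nodesOn A m ℓ) := disjoint.mono_left F_sub
  have five_mul_le (y : ι) (hy : y ∈ nodesOn A m ℓ) : 5 * m y ≤ ∑ x ∈ F, m x := by
    have := Finset.card_nsmul_le_sum F m (m y) fun x hx =>
      F_max x hx y (Finset.disjoint_right.1 disjoint_F hy)
    rwa [F_card, smul_eq_mul] at this
  have five_mul_sum_le : 5 * ∑ y ∈ nodesOn A m ℓ, m y ≤ 2 * ∑ x ∈ F, m x := by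
    rw [Finset.mul_sum]
    refine (Finset.sum_le_card_nsmul _ _ _ five_mul_le).trans ?_
    exact Nat.mul_le_mul_right _ (card_le_two ℓ ℓ_deg)
  have sum_le : ∑ x ∈ F, m x + ∑ y ∈ nodesOn A m ℓ, m y ≤ ∑ k, m k := by
    rw [← Finset.sum_disjUnion disjoint_F]
    exact Finset.sum_le_sum_of_subset (Finset.subset_univ _)
  rw [sum_nodesOn, hℓ] at five_mul_sum_le sum_le
  lia

lemma imposesIndependentConditions_of_card_nodesOn_le_two {n : ℕ} {m : ι → ℕ}
    (hm : ∑ k, m k = 2 * n + 4) (hlines : CurveMultiplicityLE A m 1 (n + 1))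
    (hconics : CurveMultiplicityLE A m 2 (2 * n + 3))
    (card_le_two : ∀ ℓ : MvPolynomial (Fin 2) K, ℓ.totalDegree = 1 → (nodesOn A m ℓ).card ≤ 2) :
    ImposesIndependentConditions (fatPointIdeal A m) (n + 1) := by
  obtain ⟨q, F, q_ne, q_deg, F_card, F_sub, F_max⟩ :=
    exists_conic_through_heaviest hconics (by lia)
  have sum_residual := sum_residual_add_card_nodesOn (A := A) (m := m) (q := q)
  have five_le := F_card.ge.trans (Finset.card_le_card F_sub)
  obtain ⟨n, rfl⟩ : ∃ n', n = n' + 1 := ⟨n - 1, by lia⟩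
  have hres : ImposesIndependentConditions (fatPointIdeal A (residual A q m)) n :=
    imposesIndependentConditions_of_sum_le_two_mul (by lia)
      (hlines.residual_heaviest hm.le card_le_two F_card F_sub F_max)
  have hrestriction : ImposesIndependentConditions (fatPointIdeal A (restriction A q m)) (n + 2) :=
    imposesIndependentConditions_of_sum_le_two_mul (sum_restriction.trans_le (hconics q q_ne q_deg))
      fun ℓ ℓ_ne ℓ_deg => (hlines.mono restriction_le ℓ ℓ_ne ℓ_deg).trans (Nat.le_succ _)
  exact .of_residual (d := 2) q_deg.le hres (hrestriction.mono le_sup_left)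

lemma imposesIndependentConditions_of_sum_eq {n : ℕ} {m : ι → ℕ} (hm : ∑ k, m k = 2 * n + 2)
    (hscheme : ∑ k, (m k + 1).choose 2 ≤ (n + 2).choose 2)
    (hlines : CurveMultiplicityLE A m 1 (n + 1))
    (hconics : CurveMultiplicityLE A m 2 (2 * n + 1)) :
    ImposesIndependentConditions (fatPointIdeal A m) n := by
  induction n generalizing m with
  | zero =>
    have sum_le : ∑ k, m k ≤ ∑ k, (m k + 1).choose 2 :=
      Finset.sum_le_sum fun k _ => self_le_choose_two (m k)
    rw [hm] at sum_le
    exact absurd (sum_le.trans hscheme) (by decide)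
  | succ n ih =>
    obtain ⟨ℓ, ℓ_ne, ℓ_deg, maximal⟩ := exists_line_multiplicityOn_max A m
    have hℓ := hlines ℓ ℓ_ne ℓ_deg
    rcases hℓ.lt_or_eq with not_full | full
    · have hlines' : CurveMultiplicityLE A m 1 (n + 1) := fun t t_ne t_deg =>
        (maximal t t_ne t_deg).trans (Nat.lt_succ_iff.1 not_full)
      by_cases! h : ∀ ℓ : MvPolynomial (Fin 2) K, ℓ.totalDegree = 1 → (nodesOn A m ℓ).card ≤ 2
      · exact imposesIndependentConditions_of_card_nodesOn_le_two hm hlines' hconics h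
      · obtain ⟨t, t_deg, card_nodes⟩ := h
        have t_ne : t ≠ 0 := by rintro rfl; simp at t_deg
        exact .of_line_of_three_le_card hm.le t_deg (hlines t t_ne t_deg) card_nodes
          (hlines'.mono residual_le)
    · have hlines_residual := hlines.residual_of_full hconics ℓ_ne ℓ_deg (by lia)
      rcases (two_le_card_nodesOn maximal (by lia)).lt_or_eq with card_nodes | card_nodes
      · exact .of_line_of_three_le_card hm.le ℓ_deg hℓ card_nodes hlines_residual
      · have sum_residual := sum_residual_add_card_nodesOn (A := A) (m := m) (q := ℓ)
        have choose_residual := sum_choose_residual_add_multiplicityOn A m ℓ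
        have pascal := Nat.choose_succ_succ' (n + 2) 1
        rw [Nat.choose_one_right] at pascal
        refine .of_residual_line ℓ_deg hℓ (ih (by lia) (by lia) hlines_residual ?_)
        exact hconics.residual_of_two_le (by lia) (by lia) fun k hk =>
          two_le_of_card_nodesOn_eq_two hm hscheme full card_nodes.symm hk

end Sufficiency

section Derivatives

open scoped Nat

lemma eval_Dij (a : Fin 2 → ℝ) (i j : ℕ) (p : MvPolynomial (Fin 2) ℝ) :
    eval a (Dij i j p) =
      coeff (Finsupp.single 0 i + Finsupp.single 1 j) (translate a p) * (i ! * j !) := by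
  change eval a ((pderiv 0)^[i] ((pderiv 1)^[j] p)) = _
  rw [← coeff_zero_translate, ← iterate_pderiv_translate, ← iterate_pderiv_translate,
    coeff_iterate_pderiv, coeff_iterate_pderiv]
  simp [Nat.one_ascFactorial, mul_assoc, mul_comm]

lemma forall_eval_Dij_eq_iff {ι : Type*} {A : ι → Fin 2 → ℝ} {m : ι → ℕ}
    {p : MvPolynomial (Fin 2) ℝ} {c : ι → ℕ → ℕ → ℝ} :
    (∀ k i j, i + j + 1 ≤ m k → eval (A k) (Dij i j p) = c k i j) ↔
      jet A m p = fun k d => c k (d.1 0) (d.1 1) / ((d.1 0)! * (d.1 1)!) := by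
  have eval_eq_iff (k : ι) (i j : ℕ) : eval (A k) (Dij i j p) = c k i j ↔
      coeff (Finsupp.single 0 i + Finsupp.single 1 j) (translate (A k) p) =
        c k i j / (i ! * j !) := by
    rw [eval_Dij, eq_div_iff (by positivity)]
  simp only [eval_eq_iff]
  refine ⟨fun h => funext fun k => funext fun d => ?_, fun h k i j hij => ?_⟩
  · have d_eq : Finsupp.single 0 (d.1 0) + Finsupp.single 1 (d.1 1) = d.1 := by
      ext i
      fin_cases i <;> simp
    have degree_lt : d.1 0 + d.1 1 < m k := by
      rw [← Fin.sum_univ_two d.1, ← Finsupp.degree_eq_sum]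
      exact d.2
    have := h k _ _ degree_lt
    rwa [d_eq] at this
  · have := congr_fun (congr_fun h k)
      ⟨Finsupp.single 0 i + Finsupp.single 1 j, by simpa [Finsupp.degree_single] using hij⟩
    simpa [jet_apply] using this

lemma hermiteSolvable_iff {n s : ℕ} {nk : Fin s → ℕ} {A : Fin s → Fin 2 → ℝ}
    (hA : Function.Injective A) :
    HermiteSolvable n s nk A ↔ ImposesIndependentConditions (fatPointIdeal A nk) n := by
  simp only [HermiteSolvable, forall_eval_Dij_eq_iff]
  constructor
  · intro h f
    obtain ⟨p, hp, jet_p⟩ := h fun k i j => eval (A k) (Dij i j f)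
    have jet_f := forall_eval_Dij_eq_iff.1 fun k i j (_ : i + j + 1 ≤ nk k) =>
      (rfl : eval (A k) (Dij i j f) = _)
    exact ⟨p, hp, jet_eq_iff.1 (jet_f.trans jet_p.symm)⟩
  · intro h c
    obtain ⟨f, jet_f⟩ := jet_surjective hA nk fun k d =>
      c k (d.1 0) (d.1 1) / ((d.1 0)! * (d.1 1)!)
    obtain ⟨p, hp, hfp⟩ := h f
    exact ⟨p, hp, (jet_eq_iff.2 hfp).symm.trans jet_f⟩

end Derivatives

end HermiteInterpolation

open HermiteInterpolation in
theorem stmt_0_general {ι K : Type*} [Fintype ι] [Field K] [DecidableEq K] {n : ℕ} {m : ι → ℕ}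
    {A : ι → Fin 2 → K} (hA : Function.Injective A)
    (hscheme : ∑ k, (m k + 1).choose 2 ≤ (n + 2).choose 2) (hsum : ∑ k, m k ≤ 2 * n + 2) :
    ImposesIndependentConditions (fatPointIdeal A m) n ↔
      CurveMultiplicityLE A m 1 (n + 1) ∧ CurveMultiplicityLE A m 2 (2 * n + 1) := by
  refine ⟨fun h => ⟨fun ℓ ℓ_ne ℓ_deg => ?_, fun β β_ne β_deg => ?_⟩, fun ⟨hlines, hconics⟩ => ?_⟩
  · have := h.multiplicityOn_add_choose_le hA ℓ_ne
    rw [ℓ_deg, Nat.choose_succ_succ' (n + 1) 1, Nat.choose_one_right] at this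
    lia
  · have := h.multiplicityOn_add_choose_le hA β_ne
    rw [β_deg, Nat.add_sub_cancel, Nat.choose_succ_succ' (n + 1) 1, Nat.choose_succ_succ' n 1,
      Nat.choose_one_right, Nat.choose_one_right] at this
    lia
  · rcases hsum.lt_or_eq with hlt | heq
    · exact imposesIndependentConditions_of_sum_le_two_mul (Nat.lt_succ_iff.1 hlt) hlines
    · exact imposesIndependentConditions_of_sum_eq heq hscheme hlines hconics

open scoped Classical in
theorem stmt_0 (n s : ℕ) (hn : 1 ≤ n) (nk : Fin s → ℕ) (hnk : ∀ k, 1 ≤ nk k)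
    (A : Fin s → Fin 2 → ℝ) (hA : Function.Injective A)
    (hscheme : ∑ k, Nat.choose (nk k + 1) 2 ≤ Nat.choose (n + 2) 2)
    (hsum : ∑ k, nk k ≤ 2 * n + 2) :
    HermiteSolvable n s nk A ↔
      ((∀ ℓ : MvPolynomial (Fin 2) ℝ, ℓ ≠ 0 → ℓ.totalDegree = 1 →
          ∑ k ∈ Finset.univ.filter fun k => eval (A k) ℓ = 0, nk k ≤ n + 1) ∧
       (∀ β : MvPolynomial (Fin 2) ℝ, β ≠ 0 → β.totalDegree = 2 →
          ∑ k ∈ Finset.univ.filter fun k => eval (A k) β = 0, nk k ≤ 2 * n + 1)) :=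
  (HermiteInterpolation.hermiteSolvable_iff hA).trans
    (stmt_0_general hA hscheme hsum)
end

section
/- Let n ≥ 1 and let N = {n_1,…,n_s; n} be a scheme for distinct nodes X = {A_1,…,A_s} ⊂ ℝ² such that Σ_{k=1}^s n_k ≤ 2n+1. Then the Hermite interpolation problem (N,X) is n-solvable if and only if for every line ℓ, the sum of the multiplicities n_k over the nodes A_k lying on ℓ is at most n+1. -/
open MvPolynomial

/-!
A problem of degree `n` restricts, along a line, to a univariate Hermite problem of degree `n`. The
latter is solvable exactly when the multiplicities add up to at most `n + 1`, so the condition is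
necessary. Conversely, interpolate along a line `ℓ` by a polynomial `q` of degree at most `n`, and
correct it to `q + ℓ * p`: then `p` solves a problem of degree `n - 1`, in which the multiplicities
on `ℓ` have dropped by one. With `ℓ` of maximal weight the conditions are inherited by this smaller
problem: `ℓ` contains two nodes (if there are that many), so the total drops by two, and two lines
of weight `n + 1` share a node as long as the total is at most `2 * n + 1`.
-/

open Finset

open scoped Polynomial

section Residual

variable {ι : Type*} [DecidableEq ι]

/-- The multiplicities left after dividing out a line through the nodes in `L`: each positive
multiplicity on `L` drops by one. The subtraction is truncated, so that nodes of multiplicity `0`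
keep it. -/
def residualMult (L : Finset ι) (m : ι → ℕ) (k : ι) : ℕ :=
  if k ∈ L then m k - 1 else m k

lemma sum_residualMult_add_card (L T : Finset ι) (m : ι → ℕ) :
    ∑ k ∈ T, residualMult L m k + #{k ∈ T | k ∈ L ∧ m k ≠ 0} = ∑ k ∈ T, m k := by
  rw [card_filter, ← sum_add_distrib]
  refine sum_congr rfl fun k _ => ?_
  unfold residualMult
  split_ifs <;> grind

variable [Fintype ι] {𝓛 : Set (Finset ι)} {m : ι → ℕ} {L : Finset ι} {n : ℕ}

lemma sum_univ_eq_or_two_le_card_of_max (hpair : ∀ i j, ∃ L ∈ 𝓛, i ∈ L ∧ j ∈ L)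
    (hmax : ∀ L' ∈ 𝓛, ∑ k ∈ L', m k ≤ ∑ k ∈ L, m k) :
    ∑ k, m k = ∑ k ∈ L, m k ∨ 2 ≤ #{k | k ∈ L ∧ m k ≠ 0} := by
  by_cases hL : ∀ j ∉ L, m j = 0
  · exact .inl (sum_subset (subset_univ L) fun j _ => hL j).symm
  push Not at hL
  obtain ⟨j, hjL, hj⟩ := hL
  refine .inr <| by_contra fun hcard => ?_
  have : Nonempty ι := ⟨j⟩
  obtain ⟨i, hi⟩ := card_le_one_iff_subset_singleton.1 (Nat.le_of_lt_succ (not_le.1 hcard))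
  obtain ⟨L', hL', hiL', hjL'⟩ := hpair i j
  have hsub : insert j ({k | k ∈ L ∧ m k ≠ 0} : Finset ι) ⊆ L' :=
    insert_subset hjL' (hi.trans (singleton_subset_iff.2 hiL'))
  have hle := (sum_le_sum_of_subset (f := m) hsub).trans (hmax L' hL')
  have hsupport : ∑ k with k ∈ L ∧ m k ≠ 0, m k = ∑ k ∈ L, m k :=
    sum_subset (fun k hk => (mem_filter.1 hk).2.1) (by simp +contextual)
  rw [sum_insert (by simp [hjL]), hsupport] at hle
  omega

lemma sum_univ_residualMult_le_of_max (hpair : ∀ i j, ∃ L ∈ 𝓛, i ∈ L ∧ j ∈ L)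
    (hmax : ∀ L' ∈ 𝓛, ∑ k ∈ L', m k ≤ ∑ k ∈ L, m k)
    (hsum : ∑ k, m k ≤ 2 * n + 3) (hL : ∑ k ∈ L, m k ≤ n + 2) :
    ∑ k, residualMult L m k ≤ 2 * n + 1 := by
  have hres := sum_residualMult_add_card L univ m
  rcases sum_univ_eq_or_two_le_card_of_max hpair hmax with htotal | hcard
  · have hres_le : ∑ k, residualMult L m k ≤ n + 1 := by
      by_cases hcard : #{k | k ∈ L ∧ m k ≠ 0} = 0
      · have hzero : ∑ k ∈ L, m k = 0 := sum_eq_zero fun k hk => by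
          simpa [hk] using filter_eq_empty_iff.1 (card_eq_zero.1 hcard) (mem_univ k)
        omega
      · omega
    omega
  · omega

-- Two lines of weight at least `n + 2` share a node of positive multiplicity, as otherwise their
-- weights would add up to more than `2 * n + 3`.
lemma sum_residualMult_le_of_max (hmax : ∀ L' ∈ 𝓛, ∑ k ∈ L', m k ≤ ∑ k ∈ L, m k)
    (hsum : ∑ k, m k ≤ 2 * n + 3) {L' : Finset ι} (hL' : L' ∈ 𝓛)
    (hle : ∑ k ∈ L', m k ≤ n + 2) :
    ∑ k ∈ L', residualMult L m k ≤ n + 1 := by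
  have hres := sum_residualMult_add_card L L' m
  by_contra! hlt
  have hcard : #{k ∈ L' | k ∈ L ∧ m k ≠ 0} = 0 := by omega
  have hinter : ∑ k ∈ L' ∩ L, m k = 0 := sum_eq_zero fun k hk => by
    obtain ⟨hkL', hkL⟩ := mem_inter.1 hk
    simpa [hkL] using filter_eq_empty_iff.1 (card_eq_zero.1 hcard) hkL'
  have hunion : ∑ k ∈ L' ∪ L, m k ≤ ∑ k, m k := sum_le_sum_of_subset (subset_univ _)
  have hadd := sum_union_inter (f := m) (s₁ := L') (s₂ := L)
  have := hmax L' hL'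
  omega

theorem exists_sum_residualMult_le (hne : 𝓛.Nonempty) (hpair : ∀ i j, ∃ L ∈ 𝓛, i ∈ L ∧ j ∈ L)
    (hsum : ∑ k, m k ≤ 2 * n + 3) (hline : ∀ L ∈ 𝓛, ∑ k ∈ L, m k ≤ n + 2) :
    ∃ L ∈ 𝓛, ∑ k, residualMult L m k ≤ 2 * n + 1 ∧
      ∀ L' ∈ 𝓛, ∑ k ∈ L', residualMult L m k ≤ n + 1 := by
  obtain ⟨L, hL, hmax⟩ := Set.exists_max_image 𝓛 (fun L => ∑ k ∈ L, m k) 𝓛.toFinite hne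
  exact ⟨L, hL, sum_univ_residualMult_le_of_max hpair hmax hsum (hline L hL),
    fun L' hL' => sum_residualMult_le_of_max hmax hsum hL' (hline L' hL')⟩

end Residual

section UnivariateHermite

variable {K ι : Type*} [Field K] {S : Finset ι} {t : ι → K}

lemma pairwise_isCoprime_X_sub_C_pow (ht : Set.InjOn t S) (m : ι → ℕ) :
    (S : Set ι).Pairwise fun i j =>
      IsCoprime ((Polynomial.X - Polynomial.C (t i)) ^ m i)
        ((Polynomial.X - Polynomial.C (t j)) ^ m j) :=
  fun _ hi _ hj hij => (Polynomial.isCoprime_X_sub_C_of_isUnit_sub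
    (sub_ne_zero_of_ne (ht.ne hi hj hij)).isUnit).pow

lemma monic_prod_X_sub_C_pow (S : Finset ι) (t : ι → K) (m : ι → ℕ) :
    (∏ i ∈ S, (Polynomial.X - Polynomial.C (t i)) ^ m i).Monic :=
  Polynomial.monic_prod_of_monic _ _ fun i _ => (Polynomial.monic_X_sub_C (t i)).pow (m i)

lemma natDegree_prod_X_sub_C_pow (S : Finset ι) (t : ι → K) (m : ι → ℕ) :
    (∏ i ∈ S, (Polynomial.X - Polynomial.C (t i)) ^ m i).natDegree = ∑ i ∈ S, m i := by
  rw [Polynomial.natDegree_prod_of_monic _ _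
    fun i _ => (Polynomial.monic_X_sub_C (t i)).pow (m i)]
  simp

lemma exists_forall_X_sub_C_pow_dvd_sub (ht : Set.InjOn t S) (m : ι → ℕ) (g : ι → K[X]) :
    ∃ q : K[X], ∀ i ∈ S, (Polynomial.X - Polynomial.C (t i)) ^ m i ∣ q - g i := by
  obtain ⟨q, hq⟩ := Ideal.exists_forall_sub_mem_ideal
    (I := fun i : S => Ideal.span {(Polynomial.X - Polynomial.C (t i)) ^ m i})
    (fun i j hij => (Ideal.isCoprime_span_singleton_iff _ _).2 <|
      pairwise_isCoprime_X_sub_C_pow ht m i.2 j.2 (Subtype.coe_ne_coe.2 hij))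
    (fun i => g i)
  exact ⟨q, fun i hi => Ideal.mem_span_singleton.1 (hq ⟨i, hi⟩)⟩

theorem univariate_hermite_solvable_iff (ht : Set.InjOn t S) (m : ι → ℕ) (n : ℕ) :
    (∀ g : ι → K[X], ∃ p : K[X], p.natDegree ≤ n ∧
      ∀ i ∈ S, (Polynomial.X - Polynomial.C (t i)) ^ m i ∣ p - g i) ↔
      ∑ i ∈ S, m i ≤ n + 1 := by
  set M := ∏ i ∈ S, (Polynomial.X - Polynomial.C (t i)) ^ m i
  have hMdeg : M.natDegree = ∑ i ∈ S, m i := natDegree_prod_X_sub_C_pow S t m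
  constructor
  · -- An interpolant of `X ^ (n + 1)` differs from it by a nonzero multiple of `M`.
    intro h
    obtain ⟨p, hp, hdvd⟩ := h fun _ => Polynomial.X ^ (n + 1)
    have hdeg : (p - Polynomial.X ^ (n + 1)).natDegree = n + 1 := by
      rw [Polynomial.natDegree_sub_eq_right_of_natDegree_lt
        (by rw [Polynomial.natDegree_X_pow]; omega), Polynomial.natDegree_X_pow]
    have hMdvd : M ∣ p - Polynomial.X ^ (n + 1) :=
      prod_dvd_of_coprime (pairwise_isCoprime_X_sub_C_pow ht m) hdvd
    rw [← hMdeg, ← hdeg]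
    exact Polynomial.natDegree_le_of_dvd hMdvd
      (Polynomial.ne_zero_of_natDegree_gt (n := n) (by omega))
  · intro hsum g
    have hmonic : M.Monic := monic_prod_X_sub_C_pow S t m
    obtain ⟨q, hq⟩ := exists_forall_X_sub_C_pow_dvd_sub ht m g
    refine ⟨q %ₘ M, ?_, fun i hi => ?_⟩
    · by_cases hM1 : M = 1
      · simp [hM1]
      · have := Polynomial.natDegree_modByMonic_lt q hmonic hM1
        omega
    · have hiM : (Polynomial.X - Polynomial.C (t i)) ^ m i ∣ M := dvd_prod_of_mem _ hi
      have := dvd_add (hiM.trans (Polynomial.dvd_modByMonic_sub q M)) (hq i hi)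
      rwa [sub_add_sub_cancel] at this

end UnivariateHermite

section TaylorShift

variable {σ R : Type*} [CommRing R]

/-- The Taylor shift `p(x) ↦ p(x + A)`; the coefficients of `taylorShift A p` are the Taylor
coefficients of `p` at the point `A`. -/
noncomputable def taylorShift (A : σ → R) : MvPolynomial σ R ≃ₐ[R] MvPolynomial σ R :=
  AlgEquiv.ofAlgHom (aeval fun v => X v + C (A v)) (aeval fun v => X v - C (A v))
    (by ext v; simp [algebraMap_eq]) (by ext v; simp [algebraMap_eq])

@[simp]
lemma taylorShift_X (A : σ → R) (v : σ) : taylorShift A (X v) = X v + C (A v) := by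
  simp [taylorShift]

@[simp]
lemma taylorShift_C (A : σ → R) (r : R) : taylorShift A (C r) = C r :=
  (taylorShift A).commutes r

lemma coeff_zero_taylorShift (A : σ → R) (p : MvPolynomial σ R) :
    coeff 0 (taylorShift A p) = eval A p := by
  rw [← constantCoeff_eq]
  induction p using MvPolynomial.induction_on <;> simp_all

lemma pderiv_taylorShift (A : σ → R) (v : σ) (p : MvPolynomial σ R) :
    pderiv v (taylorShift A p) = taylorShift A (pderiv v p) := by
  classical
  induction p using MvPolynomial.induction_on with
  | C r => simp
  | add p q hp hq => simp [hp, hq]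
  | mul_X p w hp => simp [hp, pderiv_X, Pi.single_apply, apply_ite]

lemma coeff_pderiv_iterate {v : σ} {d : σ →₀ ℕ} (hd : d v = 0) (k : ℕ) (p : MvPolynomial σ R) :
    coeff d ((fun q => pderiv v q)^[k] p) = k.factorial * coeff (d + Finsupp.single v k) p := by
  induction k generalizing p with
  | zero => simp
  | succ k ih =>
    rw [Function.iterate_succ_apply, ih, coeff_pderiv, add_assoc, ← Finsupp.single_add,
      Nat.factorial_succ]
    simp only [Finsupp.single_add, Finsupp.coe_add, Pi.add_apply, hd, Finsupp.single_eq_same,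
      zero_add, Nat.cast_mul, Nat.cast_add, Nat.cast_one]
    ring

lemma exists_coeff_taylorShift_eq [Finite σ] (A : σ → R) (m : ℕ) (g : (σ →₀ ℕ) → R) :
    ∃ p : MvPolynomial σ R, ∀ d, d.degree < m → coeff d (taylorShift A p) = g d := by
  classical
  refine ⟨(taylorShift A).symm (∑ d ∈ (Finsupp.finite_of_degree_le m).toFinset, monomial d (g d)),
    fun d hd => ?_⟩
  simp [coeff_sum, coeff_monomial, hd.le]

end TaylorShift

section Jets

variable {σ K : Type*} [Field K]

lemma mem_vanishingIdeal_singleton_iff_eval (A : σ → K) (p : MvPolynomial σ K) :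
    p ∈ vanishingIdeal K {A} ↔ eval A p = 0 := by
  rw [mem_vanishingIdeal_singleton_iff, aeval_eq_eval]

lemma map_taylorShift_vanishingIdeal_singleton (A : σ → K) :
    (vanishingIdeal K {A}).map (taylorShift A) = idealOfVars σ K := by
  ext q
  obtain ⟨p, rfl⟩ := (taylorShift A).surjective q
  rw [← pow_one (idealOfVars σ K), mem_pow_idealOfVars_iff', Ideal.mem_map_of_equiv]
  simp [Finsupp.degree_eq_zero_iff, coeff_zero_taylorShift]

theorem mem_vanishingIdeal_singleton_pow_iff (A : σ → K) (m : ℕ) (p : MvPolynomial σ K) :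
    p ∈ vanishingIdeal K {A} ^ m ↔ ∀ d, d.degree < m → coeff d (taylorShift A p) = 0 := by
  rw [← mem_pow_idealOfVars_iff', ← map_taylorShift_vanishingIdeal_singleton, ← Ideal.map_pow,
    Ideal.mem_map_of_equiv]
  exact ⟨fun hp => ⟨p, hp, rfl⟩, fun ⟨q, hq, hqp⟩ => (taylorShift A).injective hqp ▸ hq⟩

end Jets

section MixedPartials

lemma eval_Dij (A : Fin 2 → ℝ) (i j : ℕ) (p : MvPolynomial (Fin 2) ℝ) :
    eval A (Dij i j p) = i.factorial * j.factorial *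
      coeff (Finsupp.single 0 i + Finsupp.single 1 j) (taylorShift A p) := by
  have hcomm (v : Fin 2) (k : ℕ) : Function.Semiconj (taylorShift A)
      (fun q => pderiv v q)^[k] (fun q => pderiv v q)^[k] :=
    Function.Semiconj.iterate_right (fun q => (pderiv_taylorShift A v q).symm) k
  rw [← coeff_zero_taylorShift, Dij, (hcomm 0 i).eq, (hcomm 1 j).eq,
    coeff_pderiv_iterate (by simp), coeff_pderiv_iterate (by simp), zero_add, mul_assoc]

lemma single_zero_add_single_one (d : Fin 2 →₀ ℕ) :
    Finsupp.single 0 (d 0) + Finsupp.single 1 (d 1) = d := by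
  ext v; fin_cases v <;> simp

theorem mem_vanishingIdeal_singleton_pow_iff_Dij (A : Fin 2 → ℝ) (m : ℕ)
    (p : MvPolynomial (Fin 2) ℝ) :
    p ∈ vanishingIdeal ℝ {A} ^ m ↔ ∀ i j, i + j + 1 ≤ m → eval A (Dij i j p) = 0 := by
  simp only [mem_vanishingIdeal_singleton_pow_iff, eval_Dij, mul_eq_zero, Nat.cast_eq_zero,
    Nat.factorial_ne_zero, false_or]
  refine ⟨fun h i j hij => h _ (by simpa using hij), fun h d hd => ?_⟩
  rw [← single_zero_add_single_one d] at hd ⊢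
  exact h _ _ (by simpa using hd)

lemma exists_eval_Dij_eq (A : Fin 2 → ℝ) (m : ℕ) (c : ℕ → ℕ → ℝ) :
    ∃ f : MvPolynomial (Fin 2) ℝ, ∀ i j, i + j + 1 ≤ m → eval A (Dij i j f) = c i j := by
  obtain ⟨f, hf⟩ := exists_coeff_taylorShift_eq A m fun d =>
    c (d 0) (d 1) / ((d 0).factorial * (d 1).factorial)
  refine ⟨f, fun i j hij => ?_⟩
  rw [eval_Dij, hf _ (by simpa using hij)]
  simp only [Finsupp.coe_add, Pi.add_apply, Finsupp.single_eq_same, ne_eq, zero_ne_one,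
    not_false_eq_true, Finsupp.single_eq_of_ne, add_zero, one_ne_zero, zero_add]
  field_simp

lemma Dij_sub (i j : ℕ) (p q : MvPolynomial (Fin 2) ℝ) :
    Dij i j (p - q) = Dij i j p - Dij i j q := by
  simp only [Dij, iterate_map_sub]

end MixedPartials

section LineChart

variable {σ K : Type*} [Field K]

lemma totalDegree_aeval_le (u : MvPolynomial σ K) (g : K[X]) :
    (Polynomial.aeval u g).totalDegree ≤ g.natDegree * u.totalDegree := by
  rw [Polynomial.aeval_eq_sum_range]
  refine totalDegree_finsetSum_le fun i hi => ?_
  refine (totalDegree_smul_le _ _).trans ((totalDegree_pow _ _).trans ?_)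
  gcongr
  exact mem_range_succ_iff.1 hi

lemma aeval_mem_vanishingIdeal_singleton_pow {A : σ → K} {u : MvPolynomial σ K} {m : ℕ} {g : K[X]}
    (hg : (Polynomial.X - Polynomial.C (eval A u)) ^ m ∣ g) :
    Polynomial.aeval u g ∈ vanishingIdeal K {A} ^ m := by
  obtain ⟨q, rfl⟩ := hg
  rw [map_mul, map_pow]
  refine Ideal.mul_mem_right _ _ (Ideal.pow_mem_pow ?_ m)
  simp [algebraMap_eq]

lemma dvd_sub_aeval_of_forall_X {ℓ u : MvPolynomial σ K} {φ : MvPolynomial σ K →ₐ[K] K[X]}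
    (hX : ∀ v, ℓ ∣ X v - Polynomial.aeval u (φ (X v))) (f : MvPolynomial σ K) :
    ℓ ∣ f - Polynomial.aeval u (φ f) := by
  have hmk : Ideal.Quotient.mkₐ K (Ideal.span {ℓ}) =
      (Ideal.Quotient.mkₐ K (Ideal.span {ℓ})).comp ((Polynomial.aeval u).comp φ) := by
    ext v
    exact Ideal.Quotient.eq.2 (Ideal.mem_span_singleton.2 (hX v))
  exact Ideal.mem_span_singleton.1 (Ideal.Quotient.eq.1 (DFunLike.congr_fun hmk f))

/-- An affine parametrization of the zero set of `ℓ`: `restrict` pulls polynomials back to the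
parameter line, and the affine polynomial `coord` is the parameter of a point. The field
`dvd_sub_aeval` says that, modulo `ℓ`, every polynomial is a polynomial in `coord`. -/
structure LineChart (ℓ : MvPolynomial σ K) where
  restrict : MvPolynomial σ K →ₐ[K] K[X]
  coord : MvPolynomial σ K
  natDegree_restrict_le (f : MvPolynomial σ K) : (restrict f).natDegree ≤ f.totalDegree
  totalDegree_coord_le : coord.totalDegree ≤ 1
  restrict_coord : restrict coord = Polynomial.X
  dvd_sub_aeval (f : MvPolynomial σ K) : ℓ ∣ f - Polynomial.aeval coord (restrict f)

namespace LineChart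

variable {ℓ : MvPolynomial σ K} (χ : LineChart ℓ) {A : σ → K}

lemma restrict_aeval_coord (g : K[X]) : χ.restrict (Polynomial.aeval χ.coord g) = g := by
  rw [← Polynomial.aeval_algHom_apply, χ.restrict_coord, Polynomial.aeval_X_left_apply]

lemma totalDegree_aeval_coord_le (g : K[X]) :
    (Polynomial.aeval χ.coord g).totalDegree ≤ g.natDegree :=
  (totalDegree_aeval_le _ g).trans (mul_le_of_le_one_right' χ.totalDegree_coord_le)

lemma eval_restrict (hA : eval A ℓ = 0) (f : MvPolynomial σ K) :
    (χ.restrict f).eval (eval A χ.coord) = eval A f := by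
  have h := map_dvd (eval A) (χ.dvd_sub_aeval f)
  rw [hA, zero_dvd_iff, map_sub, sub_eq_zero] at h
  rw [h, ← aeval_eq_eval, ← Polynomial.aeval_algHom_apply, Polynomial.coe_aeval_eq_eval]

lemma injOn_eval_coord : Set.InjOn (fun A : σ → K => eval A χ.coord) {A | eval A ℓ = 0} := by
  intro A hA B hB (hAB : eval A χ.coord = eval B χ.coord)
  ext v
  rw [← eval_X (f := A), ← eval_X (f := B), ← χ.eval_restrict hA, ← χ.eval_restrict hB, hAB]

lemma X_sub_C_pow_dvd_restrict (hA : eval A ℓ = 0) {m : ℕ} {f : MvPolynomial σ K}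
    (hf : f ∈ vanishingIdeal K {A} ^ m) :
    (Polynomial.X - Polynomial.C (eval A χ.coord)) ^ m ∣ χ.restrict f := by
  have hle : vanishingIdeal K {A} ≤ Ideal.comap χ.restrict
      (Ideal.span {Polynomial.X - Polynomial.C (eval A χ.coord)}) := fun p hp => by
    rw [Ideal.mem_comap, Ideal.mem_span_singleton, Polynomial.dvd_iff_isRoot, Polynomial.IsRoot,
      χ.eval_restrict hA]
    exact (mem_vanishingIdeal_singleton_iff_eval A p).1 hp
  rw [← Ideal.mem_span_singleton, ← Ideal.span_singleton_pow]
  exact Ideal.le_comap_pow _ m (Ideal.pow_right_mono hle m hf)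

end LineChart

end LineChart

section PlaneLines

variable {K : Type*} [Field K]

lemma totalDegree_linear_le (a b c : K) :
    (C a * X 0 + C b * X 1 + C c : MvPolynomial (Fin 2) K).totalDegree ≤ 1 := by
  refine (totalDegree_add _ _).trans (max_le ((totalDegree_add _ _).trans (max_le ?_ ?_)) ?_)
  · exact (totalDegree_mul _ _).trans (by simp)
  · exact (totalDegree_mul _ _).trans (by simp)
  · simp

lemma totalDegree_linear_eq_one_iff (a b c : K) :
    (C a * X 0 + C b * X 1 + C c : MvPolynomial (Fin 2) K).totalDegree = 1 ↔ a ≠ 0 ∨ b ≠ 0 := by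
  set ℓ : MvPolynomial (Fin 2) K := C a * X 0 + C b * X 1 + C c with hℓ
  have h0 : coeff (Finsupp.single 0 1) ℓ = a := by
    simp [hℓ, coeff_X, Finsupp.single_left_inj, coeff_C, eq_comm (a := (0 : Fin 2 →₀ ℕ))]
  have h1 : coeff (Finsupp.single 1 1) ℓ = b := by
    simp [hℓ, coeff_X, Finsupp.single_left_inj, coeff_C, eq_comm (a := (0 : Fin 2 →₀ ℕ))]
  have hle : ℓ.totalDegree ≤ 1 := totalDegree_linear_le a b c
  refine ⟨fun h => ?_, fun h => hle.antisymm ?_⟩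
  · contrapose! h
    simp [hℓ, h]
  · rcases h with h | h
    · simpa using le_totalDegree (mem_support_iff.2 (h0.trans_ne h))
    · simpa using le_totalDegree (mem_support_iff.2 (h1.trans_ne h))

lemma exists_eq_linear {ℓ : MvPolynomial (Fin 2) K} (hℓ : ℓ.totalDegree = 1) :
    ∃ a b c : K, ℓ = C a * X 0 + C b * X 1 + C c := by
  have hlin : homogeneousComponent 1 ℓ ∈ Submodule.span K (Set.range X) :=
    homogeneousSubmodule_one_eq_span_X (R := K) (σ := Fin 2) ▸ homogeneousComponent_mem 1 ℓ
  obtain ⟨w, hw⟩ := (Submodule.mem_span_range_iff_exists_fun K).1 hlin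
  refine ⟨w 0, w 1, coeff 0 ℓ, ?_⟩
  nth_rw 1 [← sum_homogeneousComponent ℓ]
  rw [hℓ, sum_range_succ, sum_range_one, homogeneousComponent_zero, ← hw, Fin.sum_univ_two,
    smul_eq_C_mul, smul_eq_C_mul, add_comm]

lemma exists_line_through (P Q : Fin 2 → K) :
    ∃ ℓ : MvPolynomial (Fin 2) K, ℓ.totalDegree = 1 ∧ eval P ℓ = 0 ∧ eval Q ℓ = 0 := by
  by_cases hPQ : P = Q
  · refine ⟨C 1 * X 0 + C 0 * X 1 + C (-P 0),
      (totalDegree_linear_eq_one_iff _ _ _).2 (.inl one_ne_zero), ?_, ?_⟩ <;> simp [hPQ]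
  · refine ⟨C (Q 1 - P 1) * X 0 + C (P 0 - Q 0) * X 1 + C (P 1 * Q 0 - P 0 * Q 1),
      (totalDegree_linear_eq_one_iff _ _ _).2 ?_, ?_, ?_⟩
    · contrapose! hPQ
      ext v
      fin_cases v
      · exact (sub_eq_zero.1 hPQ.2)
      · exact (sub_eq_zero.1 hPQ.1).symm
    all_goals
      simp only [map_add, map_mul, eval_C, eval_X]
      ring

/-- The chart of the line `a x + b y + c = 0`, viewed as a graph over the `x`-axis, where `x` is the
coordinate `X i` and `y` is `X j`. -/
noncomputable def LineChart.ofGraph {i j : Fin 2} (hij : i ≠ j) (a c : K) {b : K} (hb : b ≠ 0) :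
    LineChart (C a * X i + C b * X j + C c) where
  restrict := aeval fun v =>
    if v = i then Polynomial.X else Polynomial.C (-a / b) * Polynomial.X + Polynomial.C (-c / b)
  coord := X i
  natDegree_restrict_le f := by
    refine (aeval_natDegree_le f le_rfl _ (n := 1) fun v => ?_).trans_eq (mul_one _)
    split_ifs
    · exact Polynomial.natDegree_X_le
    · exact Polynomial.natDegree_linear_le
  totalDegree_coord_le := (totalDegree_X i).le
  restrict_coord := by simp
  dvd_sub_aeval := dvd_sub_aeval_of_forall_X fun v => by
    by_cases hv : v = i
    · simp [hv]
    · obtain rfl : v = j := by omega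
      refine ⟨C b⁻¹, ?_⟩
      have hb' : (C b * C b⁻¹ : MvPolynomial (Fin 2) K) = 1 := by
        rw [← C_mul, mul_inv_cancel₀ hb, C_1]
      simp only [div_eq_mul_inv, neg_mul, map_neg, map_mul, aeval_X, hv, ↓reduceIte, map_add,
        Polynomial.aeval_C, algebraMap_eq, Polynomial.aeval_X]
      linear_combination -X v * hb'

lemma nonempty_lineChart {ℓ : MvPolynomial (Fin 2) K} (hℓ : ℓ.totalDegree = 1) :
    Nonempty (LineChart ℓ) := by
  obtain ⟨a, b, c, rfl⟩ := exists_eq_linear hℓ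
  rcases (totalDegree_linear_eq_one_iff a b c).1 hℓ with ha | hb
  · rw [add_comm (C a * X 0)]
    exact ⟨.ofGraph one_ne_zero b c ha⟩
  · exact ⟨.ofGraph zero_ne_one a c hb⟩

end PlaneLines

section IdealPowers

variable {R : Type*} [CommRing R] {I : Ideal R} {a b : R}

lemma span_singleton_sup_pow_eq_top [hI : I.IsMaximal] (ha : a ∉ I) (m : ℕ) :
    Ideal.span {a} ⊔ I ^ m = ⊤ :=
  Ideal.sup_pow_eq_top <| hI.out.2 _ <| right_lt_sup.2 <| by rwa [Ideal.span_singleton_le_iff_mem]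

lemma mul_mem_pow_of_mem_pow_sub_one {m : ℕ} (ha : a ∈ I) (hb : b ∈ I ^ (m - 1)) :
    a * b ∈ I ^ m :=
  Ideal.pow_le_pow_right (by omega : m ≤ m - 1 + 1) (pow_succ' I _ ▸ Ideal.mul_mem_mul ha hb)

end IdealPowers

section JetSolvable

variable {σ ι K : Type*} [Field K]

/-- Solvability in total degree at most `n` of the Hermite problem with multiplicities `m` at the
nodes `A`. The data at a node is the jet of a polynomial, and two polynomials have the same jet of
order `m k` at `A k` when their difference lies in the `m k`-th power of the ideal of the node;
this makes sense over every field. -/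
def JetSolvable (n : ℕ) (m : ι → ℕ) (A : ι → σ → K) : Prop :=
  ∀ f : ι → MvPolynomial σ K, ∃ p : MvPolynomial σ K, p.totalDegree ≤ n ∧
    ∀ k, p - f k ∈ vanishingIdeal K {A k} ^ m k

theorem hermiteSolvable_iff_jetSolvable (n s : ℕ) (nk : Fin s → ℕ) (A : Fin s → Fin 2 → ℝ) :
    HermiteSolvable n s nk A ↔ JetSolvable n nk A := by
  simp only [JetSolvable, mem_vanishingIdeal_singleton_pow_iff_Dij, Dij_sub, map_sub, sub_eq_zero]
  refine ⟨fun h f => h fun k i j => eval (A k) (Dij i j (f k)), fun h c => ?_⟩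
  choose f hf using fun k => exists_eval_Dij_eq (A k) (nk k) (c k)
  obtain ⟨p, hp, hpf⟩ := h f
  exact ⟨p, hp, fun k i j hij => (hpf k i j hij).trans (hf k i j hij)⟩

variable [Fintype ι] {A : ι → σ → K} {m : ι → ℕ} {n : ℕ}

lemma jetSolvable_zero_of_sum_le_one (hsum : ∑ k, m k ≤ 1) : JetSolvable 0 m A := by
  intro f
  by_cases hm : ∀ k, m k = 0
  · exact ⟨0, by simp, fun k => by simp [hm k]⟩
  push Not at hm
  obtain ⟨i, hi⟩ := hm
  refine ⟨C (eval (A i) (f i)), by simp, fun k => ?_⟩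
  obtain rfl | hk := eq_or_ne k i
  · have hk : m k ≤ 1 := (single_le_sum_of_canonicallyOrdered (mem_univ k)).trans hsum
    rw [show m k = 1 by omega, pow_one, mem_vanishingIdeal_singleton_iff_eval]
    simp
  · have hik : m i + m k ≤ 1 :=
      (add_le_sum (fun _ _ => Nat.zero_le _) (mem_univ i) (mem_univ k) hk.symm).trans hsum
    simp [show m k = 0 by omega]

variable [DecidableEq K]

/-- The nodes lying on the zero set of `ℓ`. -/
noncomputable def nodesOn (A : ι → σ → K) (ℓ : MvPolynomial σ K) : Finset ι :=
  {k | eval (A k) ℓ = 0}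

lemma mem_nodesOn {ℓ : MvPolynomial σ K} {k : ι} : k ∈ nodesOn A ℓ ↔ eval (A k) ℓ = 0 := by
  simp [nodesOn]

lemma LineChart.injOn_coord_nodesOn {ℓ : MvPolynomial σ K} (χ : LineChart ℓ)
    (hA : Function.Injective A) :
    Set.InjOn (fun k => eval (A k) χ.coord) (nodesOn A ℓ) := fun _ hi _ hj hij =>
  hA (χ.injOn_eval_coord (mem_nodesOn.1 hi) (mem_nodesOn.1 hj) hij)

theorem JetSolvable.sum_nodesOn_le (h : JetSolvable n m A) (hA : Function.Injective A)
    {ℓ : MvPolynomial σ K} (χ : LineChart ℓ) : ∑ k ∈ nodesOn A ℓ, m k ≤ n + 1 := by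
  refine (univariate_hermite_solvable_iff (χ.injOn_coord_nodesOn hA) m n).1 fun g => ?_
  obtain ⟨p, hp, hpg⟩ := h fun k => Polynomial.aeval χ.coord (g k)
  refine ⟨χ.restrict p, (χ.natDegree_restrict_le p).trans hp, fun k hk => ?_⟩
  simpa only [map_sub, χ.restrict_aeval_coord] using
    χ.X_sub_C_pow_dvd_restrict (mem_nodesOn.1 hk) (hpg k)

lemma LineChart.exists_sub_mem_span_sup_pow {ℓ : MvPolynomial σ K} (χ : LineChart ℓ)
    (hA : Function.Injective A) (hℓ : ∑ k ∈ nodesOn A ℓ, m k ≤ n + 1) (f : ι → MvPolynomial σ K) :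
    ∃ q : MvPolynomial σ K, q.totalDegree ≤ n ∧
      ∀ k, f k - q ∈ Ideal.span {ℓ} ⊔ vanishingIdeal K {A k} ^ m k := by
  obtain ⟨g, hg, hgf⟩ := (univariate_hermite_solvable_iff (χ.injOn_coord_nodesOn hA) m n).2 hℓ
    fun k => χ.restrict (f k)
  refine ⟨Polynomial.aeval χ.coord g, (χ.totalDegree_aeval_coord_le g).trans hg, fun k => ?_⟩
  by_cases hk : k ∈ nodesOn A ℓ
  · have hℓf := Ideal.mem_span_singleton.2 (χ.dvd_sub_aeval (f k))
    have hjet := aeval_mem_vanishingIdeal_singleton_pow (hgf k hk)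
    rw [map_sub] at hjet
    rw [← sub_add_sub_cancel (f k) (Polynomial.aeval χ.coord (χ.restrict (f k)))]
    exact Submodule.add_mem_sup hℓf (neg_sub (Polynomial.aeval χ.coord g) _ ▸ neg_mem hjet)
  · have hℓk : ℓ ∉ vanishingIdeal K {A k} := by
      rwa [mem_vanishingIdeal_singleton_iff_eval, ← mem_nodesOn]
    simp [span_singleton_sup_pow_eq_top hℓk]

theorem JetSolvable.of_residualMult [DecidableEq ι] (hA : Function.Injective A)
    {ℓ : MvPolynomial σ K} (hdeg : ℓ.totalDegree ≤ 1) (χ : LineChart ℓ)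
    (hℓ : ∑ k ∈ nodesOn A ℓ, m k ≤ n + 2)
    (hres : JetSolvable n (residualMult (nodesOn A ℓ) m) A) : JetSolvable (n + 1) m A := by
  intro f
  obtain ⟨q, hq, hfq⟩ := χ.exists_sub_mem_span_sup_pow hA hℓ f
  have hdecomp (k : ι) : ∃ h, f k - q - ℓ * h ∈ vanishingIdeal K {A k} ^ m k := by
    obtain ⟨_, hr, e, he, hre⟩ := Submodule.mem_sup.1 (hfq k)
    obtain ⟨h, rfl⟩ := Ideal.mem_span_singleton.1 hr
    exact ⟨h, by rwa [← hre, add_sub_cancel_left]⟩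
  choose h hh using hdecomp
  obtain ⟨p, hp, hph⟩ := hres h
  refine ⟨q + ℓ * p, (totalDegree_add _ _).trans (max_le hq ?_), fun k => ?_⟩
  · exact (totalDegree_mul _ _).trans (by omega)
  · have hmul : ℓ * (p - h k) ∈ vanishingIdeal K {A k} ^ m k := by
      have hpk := hph k
      unfold residualMult at hpk
      split_ifs at hpk with hk
      · exact mul_mem_pow_of_mem_pow_sub_one
          ((mem_vanishingIdeal_singleton_iff_eval _ _).2 (mem_nodesOn.1 hk)) hpk
      · exact Ideal.mul_mem_left _ ℓ hpk
    convert sub_mem hmul (hh k) using 1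
    ring

end JetSolvable

section Plane

variable {ι K : Type*} [Field K] [DecidableEq K] [Fintype ι] {A : ι → Fin 2 → K}

theorem jetSolvable_of_sum_nodesOn_le (hA : Function.Injective A) {n : ℕ} {m : ι → ℕ}
    (hsum : ∑ k, m k ≤ 2 * n + 1)
    (hline : ∀ ℓ : MvPolynomial (Fin 2) K, ℓ.totalDegree = 1 → ∑ k ∈ nodesOn A ℓ, m k ≤ n + 1) :
    JetSolvable n m A := by
  classical
  induction n generalizing m with
  | zero => exact jetSolvable_zero_of_sum_le_one hsum
  | succ n ih =>
    obtain ⟨_, ⟨ℓ, hℓ, rfl⟩, hres, hres_line⟩ := exists_sum_residualMult_le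
      (𝓛 := nodesOn A '' {ℓ | ℓ.totalDegree = 1})
      (Set.Nonempty.image _ ⟨X 0, totalDegree_X 0⟩)
      (fun i j => by
        obtain ⟨ℓ, hℓ, hi, hj⟩ := exists_line_through (A i) (A j)
        exact ⟨_, ⟨ℓ, hℓ, rfl⟩, mem_nodesOn.2 hi, mem_nodesOn.2 hj⟩)
      hsum (Set.forall_mem_image.2 fun ℓ => hline ℓ)
    obtain ⟨χ⟩ := nonempty_lineChart hℓ
    exact JetSolvable.of_residualMult hA hℓ.le χ (hline ℓ hℓ)
      (ih hres fun ℓ' hℓ' => hres_line _ ⟨ℓ', hℓ', rfl⟩)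

theorem stmt_1_general (hA : Function.Injective A) {n : ℕ} {m : ι → ℕ}
    (hsum : ∑ k, m k ≤ 2 * n + 1) :
    JetSolvable n m A ↔
      ∀ ℓ : MvPolynomial (Fin 2) K, ℓ.totalDegree = 1 → ∑ k ∈ nodesOn A ℓ, m k ≤ n + 1 :=
  ⟨fun h _ hℓ => h.sum_nodesOn_le hA (nonempty_lineChart hℓ).some,
    jetSolvable_of_sum_nodesOn_le hA hsum⟩

end Plane

open scoped Classical in
theorem stmt_1 (n s : ℕ) (hn : 1 ≤ n) (nk : Fin s → ℕ) (hnk : ∀ k, 1 ≤ nk k)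
    (A : Fin s → Fin 2 → ℝ) (hA : Function.Injective A)
    (hsum : ∑ k, nk k ≤ 2 * n + 1) :
    HermiteSolvable n s nk A ↔
      ∀ ℓ : MvPolynomial (Fin 2) ℝ, ℓ ≠ 0 → ℓ.totalDegree = 1 →
        ∑ k ∈ Finset.univ.filter fun k => eval (A k) ℓ = 0, nk k ≤ n + 1 := by
  rw [hermiteSolvable_iff_jetSolvable, stmt_1_general hA hsum]
  exact forall_congr' fun ℓ => ⟨fun h _ => h, fun h hℓ => h (by rintro rfl; simp at hℓ) hℓ⟩
end

section
/- Let N = {n_1,…,n_s; n} be a scheme for distinct nodes X = {A_1,…,A_s} ⊂ ℝ². If the Hermite interpolation problem (N,X) is n-solvable, then for every line ℓ the sum of the multiplicities n_i over the nodes A_i lying on ℓ is at most n+1. -/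
open MvPolynomial

/-!
Restricted to a line, an element of `Π_n` becomes a univariate polynomial of degree at most `n` in
a parameter of the line, and its `m`-th derivative at a node is a combination of the partial
derivatives of order `m` there. Solvability therefore lets all univariate derivatives of order less
than `n_i` at the nodes `A_i` on the line be prescribed freely, so a space of dimension `n + 1` is
mapped onto one whose dimension is the sum of these `n_i`.
-/

open scoped Polynomial
open Finset.HasAntidiagonal (antidiagonal)

section RestrictToLine

variable {σ R : Type*} [CommSemiring R]

/-- The restriction of a polynomial to the line through `P` with direction `v`, as a univariate
polynomial in the parameter `t` of the point `P + t • v`. -/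
noncomputable def restrictToLine (P v : σ → R) : MvPolynomial σ R →ₐ[R] R[X] :=
  aeval fun i => Polynomial.C (P i) + Polynomial.C (v i) * Polynomial.X

@[simp]
theorem restrictToLine_C (P v : σ → R) (a : R) : restrictToLine P v (C a) = Polynomial.C a :=
  algHom_C _ a

@[simp]
theorem restrictToLine_X (P v : σ → R) (i : σ) :
    restrictToLine P v (X i) = Polynomial.C (P i) + Polynomial.C (v i) * Polynomial.X :=
  aeval_X _ i

theorem eval_restrictToLine (P v : σ → R) (p : MvPolynomial σ R) (t : R) :
    (restrictToLine P v p).eval t = eval (P + t • v) p := by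
  induction p using MvPolynomial.induction_on with
  | C a => simp
  | add p q hp hq => simp [hp, hq]
  | mul_X p i hp => simp [← hp, mul_comm t]

theorem natDegree_restrictToLine_le (P v : σ → R) (p : MvPolynomial σ R) :
    (restrictToLine P v p).natDegree ≤ p.totalDegree := by
  have h := aeval_natDegree_le p le_rfl
    (fun i => Polynomial.C (P i) + Polynomial.C (v i) * Polynomial.X) (n := 1)
    fun i => by compute_degree
  rwa [mul_one] at h

/-- The derivative in the constant direction `v`, as a derivation of the polynomial ring. -/
noncomputable def directionalDeriv (v : σ → R) :
    Derivation R (MvPolynomial σ R) (MvPolynomial σ R) :=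
  mkDerivation R fun i => C (v i)

@[simp]
theorem directionalDeriv_X (v : σ → R) (i : σ) : directionalDeriv v (X i) = C (v i) :=
  mkDerivation_X R _ i

theorem derivative_restrictToLine (P v : σ → R) (p : MvPolynomial σ R) :
    Polynomial.derivative (restrictToLine P v p) = restrictToLine P v (directionalDeriv v p) := by
  induction p using MvPolynomial.induction_on with
  | C a => simp
  | add p q hp hq => simp [hp, hq]
  | mul_X p i hp =>
    simp only [map_mul, restrictToLine_X, Polynomial.derivative_mul, hp, Derivation.leibniz,
      directionalDeriv_X, smul_eq_mul, map_add, restrictToLine_C, Polynomial.derivative_C,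
      Polynomial.derivative_X]
    ring

theorem iterate_derivative_restrictToLine (P v : σ → R) (m : ℕ) (p : MvPolynomial σ R) :
    Polynomial.derivative^[m] (restrictToLine P v p) =
      restrictToLine P v ((directionalDeriv v)^[m] p) :=
  ((Function.Semiconj.iterate_right
    (fun p => (derivative_restrictToLine P v p).symm) m).eq p).symm

end RestrictToLine

theorem pderiv_comm {σ R : Type*} [CommSemiring R] (i j : σ) (p : MvPolynomial σ R) :
    pderiv i (pderiv j p) = pderiv j (pderiv i p) := by
  obtain rfl | hij := eq_or_ne i j
  · rfl
  ext m
  simp [coeff_pderiv, hij, hij.symm, add_right_comm m, mul_right_comm]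

theorem directionalDeriv_fin_two {R : Type*} [CommSemiring R] (v : Fin 2 → R) :
    directionalDeriv v = v 0 • pderiv 0 + v 1 • pderiv 1 := by
  ext i
  fin_cases i <;> simp [directionalDeriv, smul_eq_C_mul]

theorem iterate_directionalDeriv_eq_sum_Dij (v : Fin 2 → ℝ) (m : ℕ)
    (p : MvPolynomial (Fin 2) ℝ) :
    (directionalDeriv v)^[m] p = ∑ ij ∈ antidiagonal m,
      (m.choose ij.1 * v 0 ^ ij.1 * v 1 ^ ij.2) • Dij ij.1 ij.2 p := by
  let D : Fin 2 → Module.End ℝ (MvPolynomial (Fin 2) ℝ) := fun i => (pderiv i).toLinearMap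
  have hcomm : Commute (v 0 • D 0) (v 1 • D 1) :=
    (Commute.smul_left (LinearMap.ext (pderiv_comm 0 1)) _).smul_right _
  have hD : ⇑(directionalDeriv v) = ⇑(v 0 • D 0 + v 1 • D 1) := by
    rw [directionalDeriv_fin_two]; rfl
  rw [hD, ← Module.End.pow_apply, hcomm.add_pow', LinearMap.sum_apply]
  refine Finset.sum_congr rfl fun ij _ => ?_
  have hDij : (D 0 ^ ij.1 * D 1 ^ ij.2) p = Dij ij.1 ij.2 p := by
    rw [Module.End.mul_apply, Module.End.pow_apply, Module.End.pow_apply]; rfl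
  simp only [smul_pow, smul_mul_smul_comm, LinearMap.smul_apply, hDij, mul_assoc, mul_smul,
    Nat.cast_smul_eq_nsmul]

theorem eval_iterate_derivative_restrictToLine (P v : Fin 2 → ℝ) (t : ℝ) (m : ℕ)
    (p : MvPolynomial (Fin 2) ℝ) :
    (Polynomial.derivative^[m] (restrictToLine P v p)).eval t = ∑ ij ∈ antidiagonal m,
      m.choose ij.1 * v 0 ^ ij.1 * v 1 ^ ij.2 * eval (P + t • v) (Dij ij.1 ij.2 p) := by
  rw [iterate_derivative_restrictToLine, eval_restrictToLine,
    iterate_directionalDeriv_eq_sum_Dij, map_sum]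
  simp only [smul_eval]

theorem sum_le_of_forall_exists_eval_iterate_derivative_eq {ι R : Type*} [CommRing R]
    [Nontrivial R] {S : Finset ι} {μ : ι → ℕ} {t : ι → R} {N : ℕ}
    (h : ∀ d : ι → ℕ → R, ∃ q ∈ Polynomial.degreeLT R N,
      ∀ k ∈ S, ∀ m < μ k, (Polynomial.derivative^[m] q).eval (t k) = d k m) :
    ∑ k ∈ S, μ k ≤ N := by
  let T : Finset (Σ _ : ι, ℕ) := S.sigma fun k => Finset.range (μ k)
  let jets : Polynomial.degreeLT R N →ₗ[R] T → R := LinearMap.pi fun km =>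
    Polynomial.leval (t km.1.1) ∘ₗ (Polynomial.derivative ^ km.1.2 : Module.End R R[X]) ∘ₗ
      Submodule.subtype _
  have jets_surjective : Function.Surjective jets := fun c => by
    obtain ⟨q, hqN, hq⟩ := h fun k m => Function.extend Subtype.val c 0 ⟨k, m⟩
    refine ⟨⟨q, hqN⟩, funext fun ⟨⟨k, m⟩, hkm⟩ => ?_⟩
    obtain ⟨hk, hm⟩ := Finset.mem_sigma.mp hkm
    calc jets ⟨q, hqN⟩ ⟨⟨k, m⟩, hkm⟩ = (Polynomial.derivative^[m] q).eval (t k) := by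
          simp [jets, Module.End.pow_apply]
      _ = c ⟨⟨k, m⟩, hkm⟩ := by
          rw [hq k hk m (Finset.mem_range.mp hm)]
          exact Subtype.val_injective.extend_apply c 0 ⟨⟨k, m⟩, hkm⟩
  have basis := Polynomial.degreeLT.basis R N
  have := Module.Finite.of_basis basis
  have hrank := LinearMap.finrank_le_finrank_of_surjective jets_surjective
  simpa [Module.finrank_eq_card_basis basis, T] using hrank

theorem exists_eq_sum_smul_X_add_C_of_totalDegree_le_one {σ R : Type*} [Fintype σ]
    [CommSemiring R] {p : MvPolynomial σ R} (hp : p.totalDegree ≤ 1) :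
    ∃ (a : σ → R) (c : R), p = ∑ i, a i • X i + C c := by
  have hlin : homogeneousComponent 1 p ∈ Submodule.span R (Set.range X) := by
    rw [← homogeneousSubmodule_one_eq_span_X]
    exact homogeneousComponent_mem 1 p
  obtain ⟨a, ha⟩ := (Submodule.mem_span_range_iff_exists_fun R).mp hlin
  refine ⟨a, coeff 0 p, ?_⟩
  rw [ha, ← homogeneousComponent_zero]
  have hsum : ∑ i ∈ Finset.range 2, homogeneousComponent i p = p :=
    (Finset.sum_subset (Finset.range_mono (by lia)) fun i _ hi =>
      homogeneousComponent_eq_zero i p (by simpa using hi)).symm.trans (sum_homogeneousComponent p)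
  rw [Finset.sum_range_succ, Finset.sum_range_one] at hsum
  rw [add_comm, hsum]

theorem isCoprime_coords_of_ne_zero {K : Type*} [Field K] {v : Fin 2 → K} (hv : v ≠ 0) :
    IsCoprime (v 0) (v 1) := by
  obtain h | h := Fin.exists_fin_two.mp (Function.ne_iff.mp hv)
  · exact ⟨(v 0)⁻¹, 0, by simp_all⟩
  · exact ⟨0, (v 1)⁻¹, by simp_all⟩

theorem exists_line_of_totalDegree_eq_one {K : Type*} [Field K] {ℓ : MvPolynomial (Fin 2) K}
    (hℓ : ℓ.totalDegree = 1) :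
    ∃ P v : Fin 2 → K, v ≠ 0 ∧ ∀ x, eval x ℓ = 0 → ∃ t : K, x = P + t • v := by
  obtain ⟨a, c, rfl⟩ := exists_eq_sum_smul_X_add_C_of_totalDegree_le_one hℓ.le
  have ha : a ≠ 0 := by
    rintro rfl
    simp at hℓ
  obtain ⟨α, β, hαβ⟩ := isCoprime_coords_of_ne_zero ha
  refine ⟨![-c * α, -c * β], ![-a 1, a 0], ?_, fun x hx => ⟨α * x 1 - β * x 0, ?_⟩⟩
  · contrapose! ha
    simpa [funext_iff, Fin.forall_fin_two, and_comm] using ha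
  have hx' : a 0 * x 0 + a 1 * x 1 + c = 0 := by simpa [smul_eval] using hx
  refine funext (Fin.forall_fin_two.mpr ⟨?_, ?_⟩)
  · change x 0 = -c * α + (α * x 1 - β * x 0) * -a 1
    linear_combination (-x 0) * hαβ + α * hx'
  · change x 1 = -c * β + (α * x 1 - β * x 0) * a 0
    linear_combination (-x 1) * hαβ + β * hx'

namespace HermiteSolvable

variable {n s : ℕ} {nk : Fin s → ℕ} {A : Fin s → Fin 2 → ℝ}

theorem exists_eval_iterate_derivative_eq (h : HermiteSolvable n s nk A) {S : Finset (Fin s)}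
    {P v : Fin 2 → ℝ} (hv : v ≠ 0) {t : Fin s → ℝ} (hA : ∀ k ∈ S, A k = P + t k • v)
    (d : Fin s → ℕ → ℝ) :
    ∃ q ∈ Polynomial.degreeLT ℝ (n + 1),
      ∀ k ∈ S, ∀ m < nk k, (Polynomial.derivative^[m] q).eval (t k) = d k m := by
  obtain ⟨α, β, hαβ⟩ := isCoprime_coords_of_ne_zero hv
  -- Contracting `(α, β) ^ m` with `v ^ m` gives `(α * v 0 + β * v 1) ^ m = 1`.
  obtain ⟨p, hpn, hp⟩ := h fun k i j => d k (i + j) * (α ^ i * β ^ j)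
  refine ⟨restrictToLine P v p, ?_, fun k hk m hm => ?_⟩
  · rw [Polynomial.degreeLT_succ_eq_degreeLE, Polynomial.mem_degreeLE]
    exact Polynomial.degree_le_of_natDegree_le ((natDegree_restrictToLine_le P v p).trans hpn)
  calc (Polynomial.derivative^[m] (restrictToLine P v p)).eval (t k)
      = ∑ ij ∈ antidiagonal m, m.choose ij.1 * v 0 ^ ij.1 * v 1 ^ ij.2 *
          (d k m * (α ^ ij.1 * β ^ ij.2)) := by
        rw [eval_iterate_derivative_restrictToLine, ← hA k hk]
        refine Finset.sum_congr rfl fun ij hij => ?_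
        obtain rfl : ij.1 + ij.2 = m := Finset.HasAntidiagonal.mem_antidiagonal.mp hij
        rw [hp k ij.1 ij.2 hm]
    _ = d k m * (α * v 0 + β * v 1) ^ m := by
        rw [(Commute.all _ _).add_pow', Finset.mul_sum]
        refine Finset.sum_congr rfl fun ij _ => ?_
        rw [nsmul_eq_mul, mul_pow, mul_pow]
        ring
    _ = d k m := by rw [hαβ, one_pow, mul_one]

theorem sum_le_of_collinear (h : HermiteSolvable n s nk A) {S : Finset (Fin s)}
    {P v : Fin 2 → ℝ} (hv : v ≠ 0) (hS : ∀ k ∈ S, ∃ t : ℝ, A k = P + t • v) :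
    ∑ k ∈ S, nk k ≤ n + 1 := by
  choose! t ht using hS
  exact sum_le_of_forall_exists_eval_iterate_derivative_eq
    (h.exists_eval_iterate_derivative_eq hv ht)

end HermiteSolvable

open scoped Classical in
theorem stmt_4 (n s : ℕ) (nk : Fin s → ℕ) (hnk : ∀ k, 1 ≤ nk k)
    (A : Fin s → Fin 2 → ℝ) (hA : Function.Injective A)
    (hsolv : HermiteSolvable n s nk A) :
    ∀ ℓ : MvPolynomial (Fin 2) ℝ, ℓ ≠ 0 → ℓ.totalDegree = 1 →
      ∑ i ∈ Finset.univ.filter fun i => eval (A i) ℓ = 0, nk i ≤ n + 1 := by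
  intro ℓ _ hℓ
  obtain ⟨P, v, hv, hline⟩ := exists_line_of_totalDegree_eq_one hℓ
  exact hsolv.sum_le_of_collinear hv fun k hk => hline (A k) (Finset.mem_filter.mp hk).2
end

section
/- Let N = {n_1,…,n_s; n} be a scheme for distinct nodes X = {A_1,…,A_s} ⊂ ℝ² with n ≥ 2. If the Hermite interpolation problem (N,X) is n-solvable, then for every conic β the sum of the multiplicities n_i over the nodes A_i lying on β is at most 2n+1. -/
open MvPolynomial

/-!
If `q` vanishes to order `n_k - 1` at each node on the curve `β = 0` and to order `n_k` at every
other node, then `β * q` vanishes to order `n_k` at all nodes. Hence multiplication by `β` embeds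
the space of such `q` of degree at most `n - deg β` into the kernel of the interpolation map on
`Π_n`. Since that map is surjective, comparing dimensions bounds the total multiplicity on the
curve by `dim Π_n - dim Π_{n - deg β}`.
-/

section LinearAlgebra

open Module LinearMap

theorem finrank_add_finrank_le_of_ker_le_ker_comp {K U V W Y : Type*} [DivisionRing K]
    [AddCommGroup U] [Module K U] [AddCommGroup V] [Module K V] [FiniteDimensional K V]
    [AddCommGroup W] [Module K W] [AddCommGroup Y] [Module K Y] [FiniteDimensional K Y]
    {L : V →ₗ[K] W} {J : U →ₗ[K] Y} {M : U →ₗ[K] V} (hL : Function.Surjective L)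
    (hM : Function.Injective M) (hker : ker J ≤ ker (L ∘ₗ M)) :
    finrank K W + finrank K U ≤ finrank K V + finrank K Y := by
  have : FiniteDimensional K U := Module.Finite.of_injective M hM
  have kernels : finrank K (ker J) ≤ finrank K (ker L) := by
    rw [(Submodule.equivMapOfInjective M hM (ker J)).finrank_eq]
    exact Submodule.finrank_mono (Submodule.map_le_iff_le_comap.2 hker)
  have range_L : finrank K (range L) = finrank K W := by rw [range_eq_top.2 hL, finrank_top]
  have rank_nullity_L := finrank_range_add_finrank_ker L
  have rank_nullity_J := finrank_range_add_finrank_ker J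
  have range_J := Submodule.finrank_le (range J)
  lia

end LinearAlgebra

section Degree

/-- The exponents of the monomials of total degree less than `m`; they also index the partial
derivatives of order less than `m`. -/
def exponentsLT (σ : Type*) [Fintype σ] [DecidableEq σ] (m : ℕ) : Finset (σ →₀ ℕ) :=
  (Finset.range m).biUnion fun d => Finset.univ.finsuppAntidiag d

/-- The polynomials of total degree less than `m`. With a strict bound the zero space is the case
`m = 0`, so that truncated subtraction of degrees gives the right space. -/
noncomputable def totalDegreeLT (σ R : Type*) [Fintype σ] [DecidableEq σ] [CommSemiring R] (m : ℕ) :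
    Submodule R (MvPolynomial σ R) :=
  restrictSupport R (exponentsLT σ m)

variable {σ R : Type*} [Fintype σ] [DecidableEq σ] [CommSemiring R] {m : ℕ}

theorem mem_exponentsLT {s : σ →₀ ℕ} : s ∈ exponentsLT σ m ↔ s.degree < m := by
  simp [exponentsLT, Finsupp.degree_eq_sum]

theorem mem_exponentsLT_fin_two {s : Fin 2 →₀ ℕ} : s ∈ exponentsLT (Fin 2) m ↔ s 0 + s 1 < m := by
  rw [mem_exponentsLT, Finsupp.degree_eq_sum, Fin.sum_univ_two]

theorem card_exponentsLT {r : ℕ} (hσ : Fintype.card σ = r + 1) (m : ℕ) :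
    (exponentsLT σ m).card = (m + r).choose (r + 1) := by
  have disjoint : (Finset.range m : Set ℕ).PairwiseDisjoint
      fun d => Finset.univ.finsuppAntidiag (ι := σ) d := by
    intro d _ d' _ hne
    refine Finset.disjoint_left.2 fun s hs hs' => hne ?_
    exact (Finset.mem_finsuppAntidiag.1 hs).1.symm.trans (Finset.mem_finsuppAntidiag.1 hs').1
  have card_degree (d : ℕ) :
      (Finset.univ.finsuppAntidiag (ι := σ) d).card = (d + r).choose r := by
    rw [Finset.card_finsuppAntidiag_nat_eq_choose, Finset.card_univ, hσ, ← Nat.choose_symm_add]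
    congr 1
    lia
  rw [exponentsLT, Finset.card_biUnion disjoint]
  simp only [card_degree]
  cases m with
  | zero => simp
  | succ m => rw [Nat.sum_range_add_choose, add_right_comm]

theorem mem_totalDegreeLT {p : MvPolynomial σ R} :
    p ∈ totalDegreeLT σ R m ↔ ∀ s ∈ p.support, s.degree < m := by
  simp [totalDegreeLT, mem_restrictSupport_iff, Set.subset_def, mem_exponentsLT]

theorem mem_totalDegreeLT_succ {p : MvPolynomial σ R} :
    p ∈ totalDegreeLT σ R (m + 1) ↔ p.totalDegree ≤ m := by
  simp [mem_totalDegreeLT, totalDegree, Finsupp.degree_apply, Finsupp.sum]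

theorem mul_mem_totalDegreeLT (p : MvPolynomial σ R) {q : MvPolynomial σ R}
    (hq : q ∈ totalDegreeLT σ R (m - p.totalDegree)) : p * q ∈ totalDegreeLT σ R m := by
  rw [mem_totalDegreeLT] at hq ⊢
  intro s hs
  obtain ⟨u, hu, v, hv, rfl⟩ := Finset.mem_add.1 (support_mul p q hs)
  have hu : u.degree ≤ p.totalDegree := le_totalDegree hu
  have hv := hq v hv
  rw [map_add]
  lia

instance finiteDimensional_totalDegreeLT (K : Type*) [Field K] (m : ℕ) :
    FiniteDimensional K (totalDegreeLT σ K m) :=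
  (basisRestrictSupport K (exponentsLT σ m : Set (σ →₀ ℕ))).finiteDimensional_of_finite

theorem finrank_totalDegreeLT (K : Type*) [Field K] {r : ℕ} (hσ : Fintype.card σ = r + 1) (m : ℕ) :
    Module.finrank K (totalDegreeLT σ K m) = (m + r).choose (r + 1) := by
  rw [← card_exponentsLT hσ, totalDegreeLT,
    Module.finrank_eq_card_basis (basisRestrictSupport K _)]
  simp

end Degree

section Vanishing

/-- The polynomials all of whose partial derivatives of order less than `m` vanish at `a`. -/
noncomputable def vanishingSubmodule {σ R : Type*} [CommSemiring R] (a : σ → R) :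
    ℕ → Submodule R (MvPolynomial σ R)
  | 0 => ⊤
  | m + 1 => LinearMap.ker (aeval a).toLinearMap ⊓
      ⨅ i, (vanishingSubmodule a m).comap (pderiv i).toLinearMap

variable {σ R : Type*} [CommSemiring R] {a : σ → R} {m : ℕ} {p q : MvPolynomial σ R}

theorem mem_vanishingSubmodule_zero : p ∈ vanishingSubmodule a 0 :=
  Submodule.mem_top

theorem mem_vanishingSubmodule_succ : p ∈ vanishingSubmodule a (m + 1) ↔
    eval a p = 0 ∧ ∀ i, pderiv i p ∈ vanishingSubmodule a m := by
  simp [vanishingSubmodule, aeval_eq_eval]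

theorem eval_eq_zero_of_mem_vanishingSubmodule (hp : p ∈ vanishingSubmodule a m) (hm : 0 < m) :
    eval a p = 0 := by
  obtain ⟨m, rfl⟩ := Nat.exists_eq_add_of_le' hm
  exact (mem_vanishingSubmodule_succ.1 hp).1

theorem pderiv_mem_vanishingSubmodule (hp : p ∈ vanishingSubmodule a m) (i : σ) :
    pderiv i p ∈ vanishingSubmodule a (m - 1) := by
  cases m with
  | zero => exact mem_vanishingSubmodule_zero
  | succ m => exact (mem_vanishingSubmodule_succ.1 hp).2 i

theorem mul_mem_vanishingSubmodule {k l : ℕ} (hp : p ∈ vanishingSubmodule a k)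
    (hq : q ∈ vanishingSubmodule a l) (hm : m ≤ k + l) : p * q ∈ vanishingSubmodule a m := by
  induction m generalizing k l p q with
  | zero => exact mem_vanishingSubmodule_zero
  | succ m ih =>
    refine mem_vanishingSubmodule_succ.2 ⟨?_, fun i => ?_⟩
    · rw [eval_mul]
      rcases Nat.eq_zero_or_pos k with rfl | hk
      · rw [eval_eq_zero_of_mem_vanishingSubmodule hq (by lia), mul_zero]
      · rw [eval_eq_zero_of_mem_vanishingSubmodule hp hk, zero_mul]
    · rw [pderiv_mul]
      exact add_mem (ih (pderiv_mem_vanishingSubmodule hp i) hq (by lia))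
        (ih hp (pderiv_mem_vanishingSubmodule hq i) (by lia))

theorem commute_pderiv (i j : σ) :
    Function.Commute (pderiv i : MvPolynomial σ R → MvPolynomial σ R) (pderiv j) := by
  intro p
  rcases eq_or_ne i j with rfl | hij
  · rfl
  · ext s
    simp [coeff_pderiv, hij, hij.symm, add_right_comm, mul_right_comm]

theorem mem_vanishingSubmodule_iff_iterate_pderiv {a : Fin 2 → R} {p : MvPolynomial (Fin 2) R} :
    p ∈ vanishingSubmodule a m ↔
      ∀ i j, i + j < m → eval a ((pderiv 0)^[i] ((pderiv 1)^[j] p)) = 0 := by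
  induction m generalizing p with
  | zero => simp [mem_vanishingSubmodule_zero]
  | succ m ih =>
    have iterate_zero_succ (i j : ℕ) : (pderiv 0)^[i + 1] ((pderiv 1)^[j] p) =
        (pderiv 0)^[i] ((pderiv 1)^[j] (pderiv 0 p)) := by
      rw [Function.iterate_succ_apply, (commute_pderiv 0 1).iterate_right j p]
    simp only [mem_vanishingSubmodule_succ, Fin.forall_fin_two, ih]
    constructor
    · rintro ⟨h, h₀, h₁⟩ (_ | i) (_ | j) hij
      · exact h
      · exact h₁ 0 j (by lia)
      · rw [iterate_zero_succ]
        exact h₀ i 0 (by lia)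
      · rw [iterate_zero_succ]
        exact h₀ i (j + 1) (by lia)
    · intro h
      refine ⟨h 0 0 (by lia), fun i j hij => ?_, fun i j hij => h i (j + 1) (by lia)⟩
      rw [← iterate_zero_succ]
      exact h (i + 1) j (by lia)

end Vanishing

section Jets

variable {R ι : Type*} [CommSemiring R]

/-- The `(m - 1)`-jet of a bivariate polynomial at `a`: its partial derivatives there of order
less than `m`. -/
noncomputable def jet (a : Fin 2 → R) (m : ℕ) :
    MvPolynomial (Fin 2) R →ₗ[R] (exponentsLT (Fin 2) m → R) :=
  LinearMap.pi fun s => (aeval a).toLinearMap ∘ₗ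
    ((pderiv 0).toLinearMap ^ s.1 0 * (pderiv 1).toLinearMap ^ s.1 1)

theorem jet_apply (a : Fin 2 → R) (m : ℕ) (p : MvPolynomial (Fin 2) R)
    (s : exponentsLT (Fin 2) m) :
    jet a m p s = eval a ((pderiv 0)^[s.1 0] ((pderiv 1)^[s.1 1] p)) := by
  simp [jet, Module.End.pow_apply, aeval_eq_eval]

theorem jet_eq_zero_iff {a : Fin 2 → R} {m : ℕ} {p : MvPolynomial (Fin 2) R} :
    jet a m p = 0 ↔ p ∈ vanishingSubmodule a m := by
  rw [mem_vanishingSubmodule_iff_iterate_pderiv]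
  constructor
  · intro h i j hij
    have hs : Finsupp.single 0 i + Finsupp.single 1 j ∈ exponentsLT (Fin 2) m := by
      simpa [mem_exponentsLT_fin_two] using hij
    simpa [jet_apply] using congrFun h ⟨_, hs⟩
  · intro h
    ext s
    rw [jet_apply]
    exact h _ _ (mem_exponentsLT_fin_two.1 s.2)

/-- The Hermite interpolation map, sending a polynomial to its `(m k - 1)`-jets at the nodes
`A k`. -/
noncomputable def hermiteMap (A : ι → Fin 2 → R) (m : ι → ℕ) :
    MvPolynomial (Fin 2) R →ₗ[R] ((k : ι) → exponentsLT (Fin 2) (m k) → R) :=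
  LinearMap.pi fun k => jet (A k) (m k)

theorem hermiteMap_eq_zero_iff {A : ι → Fin 2 → R} {m : ι → ℕ} {p : MvPolynomial (Fin 2) R} :
    hermiteMap A m p = 0 ↔ ∀ k, p ∈ vanishingSubmodule (A k) (m k) := by
  simp [hermiteMap, funext_iff (β := fun k => exponentsLT (Fin 2) (m k) → R), ← jet_eq_zero_iff]

theorem surjOn_hermiteMap_of_forall_exists {A : ι → Fin 2 → R} {m : ι → ℕ} {n : ℕ}
    (h : ∀ c : ι → ℕ → ℕ → R, ∃ p : MvPolynomial (Fin 2) R, p.totalDegree ≤ n ∧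
      ∀ k i j, i + j + 1 ≤ m k → eval (A k) ((pderiv 0)^[i] ((pderiv 1)^[j] p)) = c k i j) :
    Set.SurjOn (hermiteMap A m) (totalDegreeLT (Fin 2) R (n + 1)) Set.univ := by
  intro c _
  let pair (k : ι) (s : exponentsLT (Fin 2) (m k)) : ℕ × ℕ := (s.1 0, s.1 1)
  have pair_injective (k : ι) : Function.Injective (pair k) := by
    intro s t hst
    ext i
    fin_cases i
    exacts [congrArg Prod.fst hst, congrArg Prod.snd hst]
  obtain ⟨p, hdeg, hp⟩ := h fun k i j => Function.extend (pair k) (c k) 0 (i, j)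
  refine ⟨p, mem_totalDegreeLT_succ.2 hdeg, ?_⟩
  funext k s
  calc hermiteMap A m p k s
      = eval (A k) ((pderiv 0)^[s.1 0] ((pderiv 1)^[s.1 1] p)) := jet_apply _ _ _ _
    _ = Function.extend (pair k) (c k) 0 (pair k s) := hp k _ _ (mem_exponentsLT_fin_two.1 s.2)
    _ = c k s := (pair_injective k).extend_apply _ _ _

end Jets

section DimensionCount

theorem add_one_choose_two (n : ℕ) : (n + 1).choose 2 = n.choose 2 + n := by
  rw [Nat.choose_succ_succ', Nat.choose_one_right, add_comm]

variable {K ι : Type*} [Field K] [Fintype ι]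

theorem sum_choose_add_choose_le_of_surjOn_hermiteMap {A : ι → Fin 2 → K} {m : ι → ℕ} {N : ℕ}
    (hsurj : Set.SurjOn (hermiteMap A m) (totalDegreeLT (Fin 2) K N) Set.univ)
    {β : MvPolynomial (Fin 2) K} (hβ : β ≠ 0) {e : ι → ℕ}
    (he : ∀ k, β ∈ vanishingSubmodule (A k) (e k)) :
    ∑ k, (m k + 1).choose 2 + (N - β.totalDegree + 1).choose 2 ≤
      (N + 1).choose 2 + ∑ k, (m k - e k + 1).choose 2 := by
  let L := (hermiteMap A m).domRestrict (totalDegreeLT (Fin 2) K N)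
  let J := (hermiteMap A fun k => m k - e k).domRestrict
    (totalDegreeLT (Fin 2) K (N - β.totalDegree))
  let M : totalDegreeLT (Fin 2) K (N - β.totalDegree) →ₗ[K] totalDegreeLT (Fin 2) K N :=
    (LinearMap.mulLeft K β).restrict fun _ => mul_mem_totalDegreeLT β
  have L_surjective : Function.Surjective L := by
    intro c
    obtain ⟨p, hp, hpc⟩ := hsurj (Set.mem_univ c)
    exact ⟨⟨p, hp⟩, hpc⟩
  have M_injective : Function.Injective M := fun p q hpq =>
    Subtype.ext (mul_left_cancel₀ hβ (congrArg Subtype.val hpq))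
  have ker_le : LinearMap.ker J ≤ LinearMap.ker (L ∘ₗ M) := by
    intro q hq
    have hq : ∀ k, q.1 ∈ vanishingSubmodule (A k) (m k - e k) := hermiteMap_eq_zero_iff.1 hq
    exact hermiteMap_eq_zero_iff.2 fun k => mul_mem_vanishingSubmodule (he k) (hq k) (by lia)
  have finrank_jets (l : ι → ℕ) :
      Module.finrank K ((k : ι) → exponentsLT (Fin 2) (l k) → K) = ∑ k, (l k + 1).choose 2 := by
    simp [Module.finrank_pi_fintype, card_exponentsLT (Fintype.card_fin 2)]
  have := finrank_add_finrank_le_of_ker_le_ker_comp L_surjective M_injective ker_le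
  simpa only [finrank_jets, finrank_totalDegreeLT K (Fintype.card_fin 2)] using this

end DimensionCount

open scoped Classical in
theorem stmt_5_general {K ι : Type*} [Field K] [Fintype ι] (n : ℕ) (m : ι → ℕ)
    (A : ι → Fin 2 → K)
    (hsolv : ∀ c : ι → ℕ → ℕ → K, ∃ p : MvPolynomial (Fin 2) K, p.totalDegree ≤ n ∧
      ∀ k i j, i + j + 1 ≤ m k → eval (A k) ((pderiv 0)^[i] ((pderiv 1)^[j] p)) = c k i j)
    (β : MvPolynomial (Fin 2) K) (hβ : β ≠ 0) :
    ∑ k with eval (A k) β = 0, m k ≤ (n + 2).choose 2 - (n + 2 - β.totalDegree).choose 2 := by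
  let e (k : ι) : ℕ := if eval (A k) β = 0 then 1 else 0
  have he (k : ι) : β ∈ vanishingSubmodule (A k) (e k) := by
    by_cases hk : eval (A k) β = 0 <;>
      simp [e, hk, mem_vanishingSubmodule_zero, mem_vanishingSubmodule_succ]
  have sum_choose : ∑ k, (m k + 1).choose 2 =
      ∑ k, (m k - e k + 1).choose 2 + ∑ k with eval (A k) β = 0, m k := by
    rw [Finset.sum_filter, ← Finset.sum_add_distrib]
    refine Finset.sum_congr rfl fun k _ => ?_
    by_cases hk : eval (A k) β = 0
    · cases m k with
      | zero => simp
      | succ l => simp [e, hk, add_one_choose_two (l + 1)]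
    · simp [e, hk]
  have choose_degree : (n + 2 - β.totalDegree).choose 2 =
      (n + 1 - β.totalDegree + 1).choose 2 := by
    obtain h | h := le_or_gt β.totalDegree (n + 1)
    · rw [← Nat.sub_add_comm h]
    · rw [Nat.choose_eq_zero_of_lt (by lia), Nat.choose_eq_zero_of_lt (by lia)]
  have := sum_choose_add_choose_le_of_surjOn_hermiteMap
    (surjOn_hermiteMap_of_forall_exists hsolv) hβ he
  lia

open scoped Classical in
theorem stmt_5 (n s : ℕ) (hn : 2 ≤ n) (nk : Fin s → ℕ) (hnk : ∀ k, 1 ≤ nk k)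
    (A : Fin s → Fin 2 → ℝ) (hA : Function.Injective A)
    (hsolv : HermiteSolvable n s nk A) :
    ∀ β : MvPolynomial (Fin 2) ℝ, β ≠ 0 → β.totalDegree = 2 →
      ∑ i ∈ Finset.univ.filter fun i => eval (A i) β = 0, nk i ≤ 2 * n + 1 := by
  intro β hβ hdeg
  have choose_sub : (n + 2).choose 2 - n.choose 2 = 2 * n + 1 := by grind [add_one_choose_two]
  simpa [hdeg, choose_sub] using stmt_5_general n nk A hsolv β hβ
end

section
/- Let n ≥ 1, s ≥ 2, and let n_1 ≥ n_2 ≥ ⋯ ≥ n_s be positive integers. If n_1 + n_2 ≤ n + 1 and Σ_{k=1}^s n_k ≤ 2n + 1, then Σ_{k=1}^s C(n_k+1,2) ≤ C(n+2,2), i.e. Σ_{k=1}^s n_k(n_k+1)/2 ≤ (n+1)(n+2)/2. -/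
open MvPolynomial

/-!
Write `T m = (m + 1).choose 2`, so that `T (m + 1) = T m + (m + 1)`. The bound follows by induction
on `n`, lowering by one the two entries whose sum is largest. If one of them is zero, then at most
one entry is nonzero and the bound is clear. Otherwise the left side drops by their sum, which is at
most `n + 1`, the right side `T (n + 1)` drops by exactly `n + 1`, and the total drops by `2`, just
as its bound `2 * n + 1` does. The bound on the sum of two entries must improve by `1`, which only a
pair disjoint from the lowered one could prevent; but then both pairs would have sum `n + 1`, and
together they would exceed the total `2 * n + 1`.
-/

theorem exists_pair_forall_add_le {ι M : Type*} [Finite ι] [Nontrivial ι] [AddCommMagma M]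
    [LinearOrder M] (f : ι → M) :
    ∃ i j, i ≠ j ∧ f j ≤ f i ∧ ∀ k l, k ≠ l → f k + f l ≤ f i + f j := by
  obtain ⟨x, y, hxy⟩ := exists_pair_ne ι
  have : Nonempty {p : ι × ι // p.1 ≠ p.2} := ⟨⟨(x, y), hxy⟩⟩
  obtain ⟨⟨⟨i, j⟩, hij⟩, hmax⟩ :=
    Finite.exists_max fun p : {p : ι × ι // p.1 ≠ p.2} => f p.1.1 + f p.1.2
  have hmax' : ∀ k l, k ≠ l → f k + f l ≤ f i + f j := fun k l hkl => hmax ⟨(k, l), hkl⟩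
  rcases le_total (f j) (f i) with hji | hij'
  · exact ⟨i, j, hij, hji, hmax'⟩
  · exact ⟨j, i, hij.symm, hij', fun k l hkl => add_comm (f i) (f j) ▸ hmax' k l hkl⟩

theorem pairwise_add_le_of_antitone {M : Type*} [AddCommMonoid M] [Preorder M]
    [IsOrderedAddMonoid M] {s : ℕ} (hs : 1 < s) {f : Fin s → M} (hf : Antitone f) {c : M}
    (h : f ⟨0, by omega⟩ + f ⟨1, hs⟩ ≤ c) : Pairwise fun i j => f i + f j ≤ c := by
  have add_le_of_lt {i j : Fin s} (hij : i < j) : f i + f j ≤ c := by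
    have hi : (⟨0, by omega⟩ : Fin s) ≤ i := Nat.zero_le _
    have hj : (⟨1, hs⟩ : Fin s) ≤ j := Nat.one_le_of_lt hij
    exact (add_le_add (hf hi) (hf hj)).trans h
  intro i j hij
  rcases hij.lt_or_gt with hlt | hgt
  · exact add_le_of_lt hlt
  · exact add_comm (f j) (f i) ▸ add_le_of_lt hgt

theorem succ_choose_two_of_pos {m : ℕ} (hm : 0 < m) :
    (m + 1).choose 2 = (m - 1 + 1).choose 2 + m := by
  rw [Nat.sub_add_cancel hm, Nat.choose_succ_succ' m 1, Nat.choose_one_right, add_comm]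

section Decrement

variable {ι : Type*} [DecidableEq ι]

/-- The family obtained from `f` by lowering each entry indexed by `t` by one. The subtraction is
truncated, so this is meant for families that are positive on `t`. -/
def decrementOn (t : Finset ι) (f : ι → ℕ) : ι → ℕ := t.piecewise (f - 1) f

theorem decrementOn_le (t : Finset ι) (f : ι → ℕ) (k : ι) : decrementOn t f k ≤ f k :=
  t.piecewise_le_of_le_of_le (f := f - 1) tsub_le_self le_rfl k

theorem decrementOn_add_one {t : Finset ι} {f : ι → ℕ} {k : ι} (hk : k ∈ t) (hf : 0 < f k) :
    decrementOn t f k + 1 = f k := by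
  simpa [decrementOn, hk] using Nat.sub_add_cancel hf

variable [Fintype ι]

theorem sum_comp_eq_sum_comp_decrementOn_add {M : Type*} [AddCommMonoid M] {t : Finset ι}
    {f : ι → ℕ} {F : ℕ → M} {d : ι → M} (h : ∀ k ∈ t, F (f k) = F (f k - 1) + d k) :
    ∑ k, F (f k) = ∑ k, F (decrementOn t f k) + ∑ k ∈ t, d k := by
  rw [← Finset.sum_ite_mem_eq t d, ← Finset.sum_add_distrib]
  refine Finset.sum_congr rfl fun k _ => ?_
  by_cases hk : k ∈ t
  · simpa [decrementOn, hk] using h k hk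
  · simp [decrementOn, hk]

theorem sum_eq_sum_decrementOn_add_card {t : Finset ι} {f : ι → ℕ} (hf : ∀ k ∈ t, 0 < f k) :
    ∑ k, f k = ∑ k, decrementOn t f k + t.card := by
  rw [Finset.card_eq_sum_ones]
  exact sum_comp_eq_sum_comp_decrementOn_add (F := id)
    fun k hk => (Nat.sub_add_cancel (hf k hk)).symm

theorem sum_succ_choose_two_eq_sum_decrementOn_add {t : Finset ι} {f : ι → ℕ}
    (hf : ∀ k ∈ t, 0 < f k) :
    ∑ k, (f k + 1).choose 2 = ∑ k, (decrementOn t f k + 1).choose 2 + ∑ k ∈ t, f k :=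
  sum_comp_eq_sum_comp_decrementOn_add (F := fun m => (m + 1).choose 2)
    fun k hk => succ_choose_two_of_pos (hf k hk)

theorem pairwise_decrementOn_pair_add_le {f : ι → ℕ} {i j : ι} (hij : i ≠ j) (hi : 0 < f i)
    (hj : 0 < f j) (hmax : ∀ k l, k ≠ l → f k + f l ≤ f i + f j) {N : ℕ}
    (hpair : f i + f j ≤ N + 1) (hsum : ∑ k, f k ≤ 2 * N + 1) :
    Pairwise fun k l => decrementOn {i, j} f k + decrementOn {i, j} f l ≤ N := by
  intro k l hkl
  have hkl_max := hmax k l hkl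
  have hk_le := decrementOn_le {i, j} f k
  have hl_le := decrementOn_le {i, j} f l
  have hpos : ∀ x ∈ ({i, j} : Finset ι), 0 < f x := by simp [hi, hj]
  by_cases hk : k ∈ ({i, j} : Finset ι)
  · have := decrementOn_add_one hk (hpos k hk)
    omega
  by_cases hl : l ∈ ({i, j} : Finset ι)
  · have := decrementOn_add_one hl (hpos l hl)
    omega
  have hfour : f k + f l + (f i + f j) ≤ ∑ x, f x := by
    simp only [Finset.mem_insert, Finset.mem_singleton, not_or] at hk hl
    calc f k + f l + (f i + f j) = ∑ x ∈ {k, l, i, j}, f x := by simp [*, add_assoc]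
      _ ≤ ∑ x, f x := Finset.sum_le_univ_sum_of_nonneg fun _ => Nat.zero_le _
  omega

end Decrement

theorem stmt_7_general {ι : Type*} [Fintype ι] [Nontrivial ι] (n : ℕ) (f : ι → ℕ)
    (hpair : Pairwise fun i j => f i + f j ≤ n + 1) (hsum : ∑ k, f k ≤ 2 * n + 1) :
    ∑ k, (f k + 1).choose 2 ≤ (n + 2).choose 2 := by
  classical
  induction n using Nat.strong_induction_on generalizing f with
  | h n ih =>
    obtain ⟨i, j, hij, hji, hmax⟩ := exists_pair_forall_add_le f
    have hij_le : f i + f j ≤ n + 1 := hpair hij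
    rcases Nat.eq_zero_or_pos (f j) with hj | hj
    · have hzero : ∀ k, k ≠ i → f k = 0 := fun k hk => by
        have := hmax k i hk
        omega
      calc ∑ k, (f k + 1).choose 2 = (f i + 1).choose 2 :=
            Fintype.sum_eq_single i fun k hk => by simp [hzero k hk]
        _ ≤ (n + 2).choose 2 := Nat.choose_le_choose 2 (by omega)
    · obtain ⟨m, rfl⟩ : ∃ m, n = m + 1 := Nat.exists_eq_add_one.2 (by omega)
      have hpos : ∀ k ∈ ({i, j} : Finset ι), 0 < f k := by simp [hj, hj.trans_le hji]
      have hsum' := sum_eq_sum_decrementOn_add_card hpos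
      rw [Finset.card_pair hij] at hsum'
      have hpair' := pairwise_decrementOn_pair_add_le hij (hj.trans_le hji) hj hmax hij_le
        (by omega)
      calc ∑ k, (f k + 1).choose 2
          = ∑ k, (decrementOn {i, j} f k + 1).choose 2 + (f i + f j) := by
            rw [sum_succ_choose_two_eq_sum_decrementOn_add hpos, Finset.sum_pair hij]
        _ ≤ (m + 2).choose 2 + (m + 2) := by
            gcongr
            exact ih m m.lt_succ_self _ hpair' (by omega)
        _ = (m + 3).choose 2 := (succ_choose_two_of_pos (m + 1).succ_pos).symm

theorem stmt_7 (n s : ℕ) (hn : 1 ≤ n) (hs : 2 ≤ s) (nk : Fin s → ℕ)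
    (hpos : ∀ k, 1 ≤ nk k) (hdec : ∀ i j : Fin s, i ≤ j → nk j ≤ nk i)
    (h12 : nk ⟨0, by omega⟩ + nk ⟨1, by omega⟩ ≤ n + 1)
    (hsum : ∑ k, nk k ≤ 2 * n + 1) :
    ∑ k, Nat.choose (nk k + 1) 2 ≤ Nat.choose (n + 2) 2 := by
  have : Nontrivial (Fin s) := Fin.nontrivial_iff_two_le.2 hs
  exact stmt_7_general n nk (pairwise_add_le_of_antitone hs hdec h12) hsum
end
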